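/- arXiv:2404.13703 — 2 statements merged into one kernel-verified Lean document; each statement's English description precedes it below -/
import Mathlib

section
/- Suppose K'(φ) ≤ 0 for all φ ∈ [0,Φ_F], the initial datum Q_init satisfies Assumption (A2), and H_init(η) := Q_init'(η) − K(Q_init(η)) > 0 for all η ∈ [0,1]. Then there exists a unique global classical solution (Q,N) of the Q-system on [0,∞), and for all τ ≥ 0: 0 < 1/(max_{η∈[0,1]} H_init(η)) ≤ N(τ) ≤ 1/(min_{η∈[0,1]} H_init(η)) < ∞. -/
open Real Set MeasureTheory Filter Topology
open scoped ENNReal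

noncomputable section

/-- The time interval `[0, T)` in `ℝ`, where `T : ℝ≥0∞` may be `∞`. -/
def Ico0 (T : ℝ≥0∞) : Set ℝ := {τ : ℝ | 0 ≤ τ ∧ ENNReal.ofReal τ < T}

/-- Partial derivative in the time variable (one-sided at `τ = 0`). -/
def pdTau (Q : ℝ → ℝ → ℝ) (τ η : ℝ) : ℝ := derivWithin (fun s => Q s η) (Ici 0) τ

/-- Partial derivative in the spatial variable (one-sided at `η = 0` and `η = 1`). -/
def pdEta (Q : ℝ → ℝ → ℝ) (τ η : ℝ) : ℝ := derivWithin (fun x => Q τ x) (Icc 0 1) η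

/-- Assumption 1.1: `K ∈ C²(ℝ)` with `K'`, `K''` bounded on `ℝ` and `K > 0` on `[0, Φ_F]`. -/
structure KAssump (K : ℝ → ℝ) (ΦF : ℝ) : Prop where
  smooth : ContDiff ℝ 2 K
  bdd1 : ∃ C : ℝ, ∀ x : ℝ, |deriv K x| ≤ C
  bdd2 : ∃ C : ℝ, ∀ x : ℝ, |deriv (deriv K) x| ≤ C
  pos : ∀ φ ∈ Icc (0 : ℝ) ΦF, 0 < K φ

/-- `k_min := K'(0) + ∫₀^{Φ_F} min(K''(φ), 0) dφ`. -/
def kmin (K : ℝ → ℝ) (ΦF : ℝ) : ℝ :=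
  deriv K 0 + ∫ φ in (0 : ℝ)..ΦF, min (deriv (deriv K) φ) 0

/-- `k_max := K'(0) + ∫₀^{Φ_F} max(K''(φ), 0) dφ`. -/
def kmax (K : ℝ → ℝ) (ΦF : ℝ) : ℝ :=
  deriv K 0 + ∫ φ in (0 : ℝ)..ΦF, max (deriv (deriv K) φ) 0

/-- Assumption (A2) on the initial datum. -/
structure A2 (K : ℝ → ℝ) (ΦF : ℝ) (Qinit : ℝ → ℝ) : Prop where
  reg : ContDiffOn ℝ 1 Qinit (Icc 0 1)
  mono : MonotoneOn Qinit (Icc 0 1)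
  init0 : Qinit 0 = 0
  init1 : Qinit 1 = ΦF
  deriv1 : K ΦF < derivWithin Qinit (Icc 0 1) 1
  compat : derivWithin Qinit (Icc 0 1) 1 - derivWithin Qinit (Icc 0 1) 0 = K ΦF - K 0

/-- A classical solution `(Q, N)` of the Q-system on `[0, T)` with initial datum `Qinit`. -/
structure IsQSol (K : ℝ → ℝ) (ΦF : ℝ) (T : ℝ≥0∞) (Qinit : ℝ → ℝ)
    (Q : ℝ → ℝ → ℝ) (N : ℝ → ℝ) : Prop where
  initReg : ContDiffOn ℝ 1 Qinit (Icc 0 1)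
  initMono : MonotoneOn Qinit (Icc 0 1)
  init0 : Qinit 0 = 0
  init1 : Qinit 1 = ΦF
  initDeriv : K ΦF < derivWithin Qinit (Icc 0 1) 1
  reg : ContDiffOn ℝ 1 (Function.uncurry Q) (Ico0 T ×ˢ Icc (0 : ℝ) 1)
  mono : ∀ τ ∈ Ico0 T, MonotoneOn (Q τ) (Icc 0 1)
  Ncont : ContinuousOn N (Ico0 T)
  Npos : ∀ τ ∈ Ico0 T, 0 < N τ
  pde : ∀ τ ∈ Ico0 T, ∀ η ∈ Ioo (0 : ℝ) 1,
    pdTau Q τ η + pdEta Q τ η = 1 / N τ + K (Q τ η)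
  bc : ∀ τ ∈ Ico0 T, Q τ 0 = 0
  Ndef : ∀ τ ∈ Ico0 T, 1 / N τ = pdEta Q τ 1 - K ΦF
  init : ∀ η ∈ Icc (0 : ℝ) 1, Q 0 η = Qinit η
  constraint : ∀ τ ∈ Ico0 T, K ΦF < pdEta Q τ 1

/-- A classical solution `(Q, Ñ)` of the relaxed system on `[0, T)` with initial datum `Qinit`,
where `Ñ` is unconstrained in sign. -/
structure IsRelaxedSol (K : ℝ → ℝ) (ΦF : ℝ) (T : ℝ≥0∞) (Qinit : ℝ → ℝ)
    (Q : ℝ → ℝ → ℝ) (Ntil : ℝ → ℝ) : Prop where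
  initReg : ContDiffOn ℝ 1 Qinit (Icc 0 1)
  init0 : Qinit 0 = 0
  init1 : Qinit 1 = ΦF
  reg : ContDiffOn ℝ 1 (Function.uncurry Q) (Ico0 T ×ˢ Icc (0 : ℝ) 1)
  Ncont : ContinuousOn Ntil (Ico0 T)
  pde : ∀ τ ∈ Ico0 T, ∀ η ∈ Ioo (0 : ℝ) 1,
    pdTau Q τ η + pdEta Q τ η = Ntil τ + K (Q τ η)
  bc : ∀ τ ∈ Ico0 T, Q τ 0 = 0
  Ndef : ∀ τ ∈ Ico0 T, Ntil τ = pdEta Q τ 1 - K ΦF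
  init : ∀ η ∈ Icc (0 : ℝ) 1, Q 0 η = Qinit η

/-- A steady state `(Q*, N*)` of the Q-system. -/
def IsSteadyState (K : ℝ → ℝ) (ΦF : ℝ) (Qs : ℝ → ℝ) (Ns : ℝ) : Prop :=
  ContDiffOn ℝ 1 Qs (Icc 0 1) ∧ 0 < Ns ∧
    (∀ η ∈ Icc (0 : ℝ) 1, derivWithin Qs (Icc 0 1) η = K (Qs η) + 1 / Ns) ∧
    Qs 0 = 0 ∧ Qs 1 = ΦF

/-- `P₀ f := f - ∫₀¹ f`. -/
def P0 (f : ℝ → ℝ) (η : ℝ) : ℝ := f η - ∫ x in (0 : ℝ)..1, f x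

/-- `H_init := Q_init' - K ∘ Q_init` (derivative within `[0,1]`). -/
def Hinit (K : ℝ → ℝ) (Qinit : ℝ → ℝ) (η : ℝ) : ℝ :=
  derivWithin Qinit (Icc 0 1) η - K (Qinit η)


/-- Global existence for bounded, globally Lipschitz time-dependent vector fields. -/
theorem global_ode {E : Type*} [NormedAddCommGroup E] [NormedSpace ℝ E] [CompleteSpace E]
    (f : ℝ → E → E) (x₀ : E) (L C : NNReal)
    (hlip : ∀ t, LipschitzWith C (f t)) (hcont : ∀ x, Continuous (fun t => f t x))
    (hb : ∀ t x, ‖f t x‖ ≤ L) :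
    ∃ α : ℝ → E, α 0 = x₀ ∧ ∀ t, HasDerivAt α (f t (α t)) t := by
  have step : ∀ n : ℕ, ∃ α : ℝ → E, α 0 = x₀ ∧
      ∀ t ∈ Ioo (-((n : ℝ) + 1)) ((n : ℝ) + 1), HasDerivAt α (f t (α t)) t := by
    intro n
    have h0 : (0 : ℝ) ∈ Icc (-((n : ℝ) + 1)) ((n : ℝ) + 1) := by
      have : (0 : ℝ) ≤ n := by positivity
      constructor <;> linarith
    have hPL : IsPicardLindelof f (tmin := -((n : ℝ) + 1)) (tmax := (n : ℝ) + 1) ⟨0, h0⟩ x₀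
        (L * ((n : NNReal) + 1)) 0 L C := by
      refine ⟨fun t _ => (hlip t).lipschitzOnWith, fun x _ => (hcont x).continuousOn,
        fun t _ x _ => hb t x, ?_⟩
      simp
    obtain ⟨α, h1, h2⟩ := hPL.exists_eq_forall_mem_Icc_hasDerivWithinAt₀
    exact ⟨α, h1, fun t ht =>
      (h2 t (Ioo_subset_Icc_self ht)).hasDerivAt (Icc_mem_nhds ht.1 ht.2)⟩
  choose A hA0 hA using step
  have agree : ∀ m n : ℕ, m ≤ n → EqOn (A m) (A n) (Ioo (-((m : ℝ) + 1)) ((m : ℝ) + 1)) := by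
    intro m n hmn
    have hmn' : (m : ℝ) ≤ n := by exact_mod_cast hmn
    have hm : (0 : ℝ) ≤ m := by positivity
    refine ODE_solution_unique_of_mem_Ioo (v := f) (s := fun _ => univ) (K := C) (t₀ := 0)
      (fun t _ => (hlip t).lipschitzOnWith) ⟨by linarith, by linarith⟩
      (fun t ht => ⟨hA m t ht, trivial⟩)
      (fun t ht => ⟨hA n t ⟨by linarith [ht.1], by linarith [ht.2]⟩, trivial⟩) ?_
    rw [hA0, hA0]
  refine ⟨fun t => A ⌈|t|⌉₊ t, by simp [hA0], fun t => ?_⟩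
  have key : ∀ s : ℝ, ∀ n : ℕ, |s| < (n : ℝ) + 1 → A ⌈|s|⌉₊ s = A n s := by
    intro s n hs
    have h1 : |s| < (⌈|s|⌉₊ : ℝ) + 1 := by linarith [Nat.le_ceil |s|]
    rcases le_total ⌈|s|⌉₊ n with h | h
    · exact agree _ _ h (by rw [abs_lt] at h1; exact h1)
    · exact (agree _ _ h (by rw [abs_lt] at hs; exact hs)).symm
  have ht : |t| < ((⌈|t|⌉₊ : ℕ) : ℝ) + 1 := by linarith [Nat.le_ceil |t|]
  refine (hA ⌈|t|⌉₊ t (by rwa [mem_Ioo, ← abs_lt])).congr_of_eventuallyEq ?_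
  have : ∀ᶠ s in 𝓝 t, |s| < ((⌈|t|⌉₊ : ℕ) : ℝ) + 1 :=
    continuous_abs.continuousAt.eventually_lt continuousAt_const ht
  filter_upwards [this] with s hs
  exact key s _ hs

/-- Continuous partial derivatives on `[0,∞) × [0,1]` give a total derivative. -/
theorem hasFDerivWithinAt_of_partials (f a b : ℝ → ℝ → ℝ)
    (ha : ContinuousOn (Function.uncurry a) (Ici (0 : ℝ) ×ˢ Icc (0 : ℝ) 1))
    (hb : ContinuousOn (Function.uncurry b) (Ici (0 : ℝ) ×ˢ Icc (0 : ℝ) 1))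
    (hfa : ∀ t ∈ Ici (0 : ℝ), ∀ x ∈ Icc (0 : ℝ) 1,
      HasDerivWithinAt (fun s => f s x) (a t x) (Ici 0) t)
    (hfb : ∀ t ∈ Ici (0 : ℝ), ∀ x ∈ Icc (0 : ℝ) 1,
      HasDerivWithinAt (f t) (b t x) (Icc 0 1) x)
    (t : ℝ) (ht : t ∈ Ici (0 : ℝ)) (x : ℝ) (hx : x ∈ Icc (0 : ℝ) 1) :
    HasFDerivWithinAt (Function.uncurry f)
      (a t x • ContinuousLinearMap.fst ℝ ℝ ℝ + b t x • ContinuousLinearMap.snd ℝ ℝ ℝ)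
      (Ici (0 : ℝ) ×ˢ Icc (0 : ℝ) 1) (t, x) := by
  rw [hasFDerivWithinAt_iff_isLittleO, Asymptotics.isLittleO_iff]
  intro ε hε
  have hmem : (t, x) ∈ Ici (0 : ℝ) ×ˢ Icc (0 : ℝ) 1 := ⟨ht, hx⟩
  obtain ⟨δ₁, hδ₁, h₁⟩ := Metric.continuousWithinAt_iff.1 (ha _ hmem) (ε / 2) (by positivity)
  obtain ⟨δ₂, hδ₂, h₂⟩ := Metric.continuousWithinAt_iff.1 (hb _ hmem) (ε / 2) (by positivity)
  have hball : ∀ᶠ p in 𝓝[Ici (0 : ℝ) ×ˢ Icc (0 : ℝ) 1] (t, x),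
      dist p (t, x) < min δ₁ δ₂ :=
    mem_nhdsWithin_of_mem_nhds (Metric.ball_mem_nhds _ (lt_min hδ₁ hδ₂))
  filter_upwards [hball, self_mem_nhdsWithin] with p hp hpm
  obtain ⟨s, y⟩ := p
  obtain ⟨hs, hy⟩ := hpm
  rw [Prod.dist_eq, max_lt_iff, lt_min_iff, lt_min_iff] at hp
  obtain ⟨⟨hs1, hs2⟩, hy1, hy2⟩ := hp
  simp only at hs1 hs2 hy1 hy2 hs hy
  have e1 : ‖(f s y - a t x * s) - (f t y - a t x * t)‖ ≤ ε / 2 * ‖s - t‖ := by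
    refine Convex.norm_image_sub_le_of_norm_hasDerivWithin_le
      (f := fun r => f r y - a t x * r) (f' := fun r => a r y - a t x)
      (s := Ici 0 ∩ Metric.ball t δ₁) ?_ ?_
      ((convex_Ici 0).inter (convex_ball t δ₁)) ⟨ht, Metric.mem_ball_self hδ₁⟩ ⟨hs, hs1⟩
    · intro r hr
      have h := ((hfa r hr.1 y hy).mono inter_subset_left (s := Ici 0 ∩ Metric.ball t δ₁)).fun_sub
        ((hasDerivWithinAt_id r (Ici 0 ∩ Metric.ball t δ₁)).const_mul (a t x))
      simpa using h
    · intro r hr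
      have := h₁ (x := (r, y)) ⟨hr.1, hy⟩ (by rw [Prod.dist_eq]; exact max_lt hr.2 hy1)
      exact le_of_lt this
  have e2 : ‖(f t y - b t x * y) - (f t x - b t x * x)‖ ≤ ε / 2 * ‖y - x‖ := by
    refine Convex.norm_image_sub_le_of_norm_hasDerivWithin_le
      (f := fun r => f t r - b t x * r) (f' := fun r => b t r - b t x)
      (s := Icc 0 1 ∩ Metric.ball x δ₂) ?_ ?_
      ((convex_Icc 0 1).inter (convex_ball x δ₂)) ⟨hx, Metric.mem_ball_self hδ₂⟩ ⟨hy, hy2⟩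
    · intro r hr
      have h := ((hfb t ht r hr.1).mono inter_subset_left (s := Icc 0 1 ∩ Metric.ball x δ₂)).fun_sub
        ((hasDerivWithinAt_id r (Icc 0 1 ∩ Metric.ball x δ₂)).const_mul (b t x))
      simpa using h
    · intro r hr
      have := h₂ (x := (t, r)) ⟨ht, hr.1⟩
        (by rw [Prod.dist_eq]; exact max_lt (by simpa using hδ₂) hr.2)
      exact le_of_lt this
  have n1 : ‖s - t‖ ≤ ‖(s, y) - (t, x)‖ := norm_fst_le ((s, y) - (t, x))
  have n2 : ‖y - x‖ ≤ ‖(s, y) - (t, x)‖ := norm_snd_le ((s, y) - (t, x))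
  have : Function.uncurry f (s, y) - Function.uncurry f (t, x) -
      (a t x • ContinuousLinearMap.fst ℝ ℝ ℝ + b t x • ContinuousLinearMap.snd ℝ ℝ ℝ)
        ((s, y) - (t, x)) =
      ((f s y - a t x * s) - (f t y - a t x * t)) +
        ((f t y - b t x * y) - (f t x - b t x * x)) := by
    simp [Function.uncurry]; ring
  rw [this]
  refine (norm_add_le _ _).trans ?_
  nlinarith

theorem uniqueDiffOn_strip : UniqueDiffOn ℝ (Ici (0 : ℝ) ×ˢ Icc (0 : ℝ) 1) :=
  (uniqueDiffOn_Ici 0).prod (uniqueDiffOn_Icc zero_lt_one)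

/-- Continuous partial derivatives on `[0,∞) × [0,1]` give `C¹`. -/
theorem contDiffOn_of_partials (f a b : ℝ → ℝ → ℝ)
    (ha : ContinuousOn (Function.uncurry a) (Ici (0 : ℝ) ×ˢ Icc (0 : ℝ) 1))
    (hb : ContinuousOn (Function.uncurry b) (Ici (0 : ℝ) ×ˢ Icc (0 : ℝ) 1))
    (hfa : ∀ t ∈ Ici (0 : ℝ), ∀ x ∈ Icc (0 : ℝ) 1,
      HasDerivWithinAt (fun s => f s x) (a t x) (Ici 0) t)
    (hfb : ∀ t ∈ Ici (0 : ℝ), ∀ x ∈ Icc (0 : ℝ) 1,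
      HasDerivWithinAt (f t) (b t x) (Icc 0 1) x) :
    ContDiffOn ℝ 1 (Function.uncurry f) (Ici (0 : ℝ) ×ˢ Icc (0 : ℝ) 1) := by
  have hd := hasFDerivWithinAt_of_partials f a b ha hb hfa hfb
  rw [show (1 : WithTop ℕ∞) = 0 + 1 by simp,
    contDiffOn_succ_iff_fderivWithin uniqueDiffOn_strip, contDiffOn_zero]
  refine ⟨fun p hp => (hd p.1 hp.1 p.2 hp.2).differentiableWithinAt, by simp, ?_⟩
  have : ContinuousOn (fun p : ℝ × ℝ =>
      a p.1 p.2 • ContinuousLinearMap.fst ℝ ℝ ℝ + b p.1 p.2 • ContinuousLinearMap.snd ℝ ℝ ℝ)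
      (Ici (0 : ℝ) ×ˢ Icc (0 : ℝ) 1) :=
    (ha.smul continuousOn_const).add (hb.smul continuousOn_const)
  exact this.congr fun p hp => (hd p.1 hp.1 p.2 hp.2).fderivWithin (uniqueDiffOn_strip p hp)

/-- A barrier lemma: if `g ≤ M` initially and `g` cannot grow while above `M`, then `g ≤ M`. -/
theorem barrier_le (g g' : ℝ → ℝ) (M : ℝ) (hg : ∀ t, HasDerivAt g (g' t) t) (h0 : g 0 ≤ M)
    (h : ∀ t, 0 ≤ t → M < g t → g' t ≤ 0) (t : ℝ) (ht : 0 ≤ t) : g t ≤ M := by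
  refine le_of_forall_pos_le_add fun ε hε => ?_
  have hpos : (0 : ℝ) < 1 + t := by linarith
  set e := ε / (1 + t) with he
  have hepos : 0 < e := by positivity
  have := image_le_of_deriv_right_lt_deriv_boundary (f := g) (f' := g') (a := 0) (b := t)
    (B := fun s => M + e * (1 + s)) (B' := fun _ => e)
    (fun s _ => (hg s).continuousAt.continuousWithinAt) (fun s _ => (hg s).hasDerivWithinAt)
    (by simp; linarith) (fun s => by
      simpa using (((hasDerivAt_id s).const_add 1).const_mul e).const_add M)
    (fun s hs hs' => lt_of_le_of_lt (h s hs.1 (by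
      rw [hs']; have := hs.1; have : 0 < e * (1 + s) := by positivity
      linarith)) hepos) (right_mem_Icc.2 ht)
  have e1 : e * (1 + t) = ε := by rw [he]; field_simp
  simp only [e1] at this
  exact this

/-- The circle `ℝ / ℤ`. -/
abbrev Circ := AddCircle (1 : ℝ)

/-- First component of the vector field: joint continuity. -/
theorem vf1_cont (k c : ℝ → ℝ) (qi : Circ → ℝ) (C₁ : ℝ) (hk : Continuous k)
    (hkb : ∀ x, |k x| ≤ C₁) (hc : Continuous c) (hqi : ∀ θ : Circ, θ ≠ 0 → ContinuousAt qi θ)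
    (G q : C(Circ, ℝ)) :
    Continuous (fun p : ℝ × Circ => k (qi (p.2 + (p.1 : Circ)) + q (p.2 + (p.1 : Circ))) *
      (c (G p.2) - c (G (-(p.1 : Circ))))) := by
  have hcoe : Continuous (fun t : ℝ => (t : Circ)) := AddCircle.continuous_mk' _
  rw [continuous_iff_continuousAt]
  rintro ⟨t, x⟩
  have hadd : Continuous (fun p : ℝ × Circ => p.2 + (p.1 : Circ)) := by fun_prop
  have hdiff : Continuous (fun p : ℝ × Circ => c (G p.2) - c (G (-(p.1 : Circ)))) := by fun_prop
  by_cases h : x + (t : Circ) = 0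
  · have hx : x = -(t : Circ) := eq_neg_of_add_eq_zero_left h
    have hz : c (G x) - c (G (-(t : Circ))) = 0 := by rw [hx]; simp
    have hlim : Tendsto (fun p : ℝ × Circ => C₁ * |c (G p.2) - c (G (-(p.1 : Circ)))|) (𝓝 (t, x))
        (𝓝 0) := by
      have : ContinuousAt (fun p : ℝ × Circ => C₁ * |c (G p.2) - c (G (-(p.1 : Circ)))|) (t, x) :=
        (continuous_const.mul hdiff.abs).continuousAt
      simpa [ContinuousAt, hz] using this
    unfold ContinuousAt
    simp only [hz, mul_zero]
    refine squeeze_zero_norm (fun p => ?_) hlim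
    rw [norm_mul]
    exact mul_le_mul_of_nonneg_right (hkb _) (abs_nonneg _)
  · refine ContinuousAt.mul ?_ hdiff.continuousAt
    have h1 : ContinuousAt (fun p : ℝ × Circ => qi (p.2 + (p.1 : Circ))) (t, x) :=
      ContinuousAt.comp (g := qi) (f := fun p : ℝ × Circ => p.2 + (p.1 : Circ))
        (hqi _ h) hadd.continuousAt
    have h2 : Continuous (fun p : ℝ × Circ => q (p.2 + (p.1 : Circ))) := q.continuous.comp hadd
    exact hk.continuousAt.comp (h1.add h2.continuousAt)

theorem vf2_cont (c : ℝ → ℝ) (hc : Continuous c) (G : C(Circ, ℝ)) :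
    Continuous (fun p : ℝ × Circ =>
      c (G (-(p.1 : Circ))) - c (G (p.2 - (p.1 : Circ)))) := by
  have hcoe : Continuous (fun t : ℝ => (t : Circ)) := AddCircle.continuous_mk' _
  fun_prop

/-- Solution of the system in the moving frame (with truncated nonlinearities). -/
theorem moving_frame (k c : ℝ → ℝ) (qi : Circ → ℝ) (C₁ : ℝ) (C₂ : NNReal) (D : ℝ)
    (hk : LipschitzWith C₂ k)
    (hkb : ∀ x, |k x| ≤ C₁) (hc : LipschitzWith 1 c) (hcb : ∀ x y, |c x - c y| ≤ D)
    (hqi : ∀ θ : Circ, θ ≠ 0 → ContinuousAt qi θ) (G₀ : C(Circ, ℝ)) :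
    ∃ G q : ℝ → C(Circ, ℝ), G 0 = G₀ ∧ q 0 = 0 ∧ ∃ G' q' : ℝ → C(Circ, ℝ),
      (∀ t, HasDerivAt G (G' t) t) ∧ (∀ t, HasDerivAt q (q' t) t) ∧
      (∀ t x, G' t x = k (qi (x + (t : Circ)) + q t (x + (t : Circ))) *
        (c (G t x) - c (G t (-(t : Circ))))) ∧
      (∀ t x, q' t x = c (G t (-(t : Circ))) - c (G t (x - (t : Circ)))) := by
  have hC₁ : 0 ≤ C₁ := (abs_nonneg _).trans (hkb 0)
  have hD : 0 ≤ D := (abs_nonneg _).trans (hcb 0 0)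
  let f1 : C(Circ, ℝ) → C(Circ, ℝ) → C(ℝ, C(Circ, ℝ)) := fun G q =>
    ContinuousMap.curry ⟨_, vf1_cont k c qi C₁ hk.continuous hkb hc.continuous hqi G q⟩
  let f2 : C(Circ, ℝ) → C(ℝ, C(Circ, ℝ)) := fun G =>
    ContinuousMap.curry ⟨_, vf2_cont c hc.continuous G⟩
  let f : ℝ → C(Circ, ℝ) × C(Circ, ℝ) → C(Circ, ℝ) × C(Circ, ℝ) := fun t z =>
    (f1 z.1 z.2 t, f2 z.1 t)
  have f1a : ∀ G q t x, f1 G q t x = k (qi (x + (t : Circ)) + q (x + (t : Circ))) *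
        (c (G x) - c (G (-(t : Circ)))) := fun _ _ _ _ => rfl
  have f2a : ∀ G t x, f2 G t x = c (G (-(t : Circ))) - c (G (x - (t : Circ))) :=
    fun _ _ _ => rfl
  have hcd : ∀ (G₁ G₂ : C(Circ, ℝ)) x, |c (G₁ x) - c (G₂ x)| ≤ dist G₁ G₂ := by
    intro G₁ G₂ x
    have h := hc.dist_le_mul (G₁ x) (G₂ x)
    have h2 := ContinuousMap.dist_apply_le_dist (f := G₁) (g := G₂) x
    rw [Real.dist_eq] at h
    simp only [NNReal.coe_one, one_mul] at h
    exact h.trans h2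
  have hkd : ∀ (q₁ q₂ : C(Circ, ℝ)) (r : ℝ) x, |k (r + q₁ x) - k (r + q₂ x)| ≤
      C₂ * dist q₁ q₂ := by
    intro q₁ q₂ r x
    have h := hk.dist_le_mul (r + q₁ x) (r + q₂ x)
    have h2 := ContinuousMap.dist_apply_le_dist (f := q₁) (g := q₂) x
    rw [dist_add_left, Real.dist_eq] at h
    exact h.trans (by gcongr)
  have hL : ∀ t, LipschitzWith (Real.toNNReal (C₂ * D + C₁ * 2 + 2)) (f t) := by
    intro t
    refine LipschitzWith.of_dist_le_mul fun z w => ?_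
    have h1 : dist z.1 w.1 ≤ dist z w := by rw [Prod.dist_eq]; exact le_max_left _ _
    have h2 : dist z.2 w.2 ≤ dist z w := by rw [Prod.dist_eq]; exact le_max_right _ _
    have hd : 0 ≤ dist z w := dist_nonneg
    have hC2 : (0 : ℝ) ≤ C₂ := C₂.2
    rw [Real.coe_toNNReal _ (by positivity), Prod.dist_eq]
    refine max_le ?_ ?_
    · refine (ContinuousMap.dist_le (by positivity)).2 fun x => ?_
      simp only [f, f1a, Real.dist_eq]
      have e1 := hkd z.2 w.2 (qi (x + (t : Circ))) (x + (t : Circ))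
      have e2 := hcb (z.1 x) (z.1 (-(t : Circ)))
      have e3 := hkb (qi (x + (t : Circ)) + w.2 (x + (t : Circ)))
      have e4 := hcd z.1 w.1 x
      have e5 := hcd z.1 w.1 (-(t : Circ))
      generalize k (qi (x + (t : Circ)) + w.2 (x + (t : Circ))) = k2 at *
      generalize k (qi (x + (t : Circ)) + z.2 (x + (t : Circ))) = k1 at *
      generalize c (z.1 x) = a1 at *
      generalize c (w.1 x) = a2 at *
      generalize c (z.1 (-(t : Circ))) = b1 at *
      generalize c (w.1 (-(t : Circ))) = b2 at *
      have e6 : k1 * (a1 - b1) - k2 * (a2 - b2) =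
        (k1 - k2) * (a1 - b1) + k2 * ((a1 - a2) - (b1 - b2)) := by ring
      rw [e6]
      refine (abs_add_le _ _).trans ?_
      rw [abs_mul, abs_mul]
      have e7 : |k1 - k2| * |a1 - b1| ≤ (C₂ * dist z w) * D :=
        mul_le_mul (e1.trans (by gcongr)) e2 (abs_nonneg _) (by positivity)
      have e8 : |k2| * |(a1 - a2) - (b1 - b2)| ≤ C₁ * (2 * dist z w) := by
        refine mul_le_mul e3 ((abs_sub _ _).trans (by linarith)) (abs_nonneg _) (by positivity)
      nlinarith
    · refine (ContinuousMap.dist_le (by positivity)).2 fun x => ?_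
      simp only [f, f2a, Real.dist_eq]
      have e4 := hcd z.1 w.1 (x - (t : Circ))
      have e5 := hcd z.1 w.1 (-(t : Circ))
      have e6 : c (z.1 (-(t : Circ))) - c (z.1 (x - t)) - (c (w.1 (-(t : Circ))) - c (w.1 (x - t)))
        = (c (z.1 (-(t : Circ))) - c (w.1 (-(t : Circ)))) - (c (z.1 (x - t)) - c (w.1 (x - t))) := by
        ring
      rw [e6]
      refine (abs_sub _ _).trans ?_
      have : 0 ≤ (C₂ * D + C₁ * 2) * dist z w := by positivity
      nlinarith
  have hCt : ∀ z, Continuous (fun t => f t z) := by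
    intro z
    exact ((f1 z.1 z.2).continuous).prodMk (f2 z.1).continuous
  have hB : ∀ t z, ‖f t z‖ ≤ (Real.toNNReal (C₁ * D + D)) := by
    intro t z
    rw [Real.coe_toNNReal _ (by positivity), Prod.norm_def]
    refine max_le ?_ ?_
    · refine (ContinuousMap.norm_le _ (by positivity)).2 fun x => ?_
      simp only [f, f1a, Real.norm_eq_abs]
      rw [abs_mul]
      have := mul_le_mul (hkb (qi (x + (t : Circ)) + z.2 (x + (t : Circ))))
        (hcb (z.1 x) (z.1 (-(t : Circ)))) (abs_nonneg _) hC₁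
      linarith
    · refine (ContinuousMap.norm_le _ (by positivity)).2 fun x => ?_
      simp only [f, f2a, Real.norm_eq_abs]
      have := hcb (z.1 (-(t : Circ))) (z.1 (x - (t : Circ)))
      have h3 : 0 ≤ C₁ * D := by positivity
      linarith
  obtain ⟨α, hα0, hα⟩ := global_ode f (G₀, 0) (Real.toNNReal (C₁ * D + D))
    (Real.toNNReal (C₂ * D + C₁ * 2 + 2)) hL hCt hB
  refine ⟨fun t => (α t).1, fun t => (α t).2, by simp [hα0], by simp [hα0],
      fun t => f1 (α t).1 (α t).2 t, fun t => f2 (α t).1 t, fun t => ?_, fun t => ?_,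
      fun t x => rfl, fun t x => rfl⟩
  · exact (hα t).fst
  · exact (hα t).snd

theorem J_deriv_fixed (g : C(Circ, ℝ)) (η t : ℝ) :
    HasDerivAt (fun s : ℝ => ∫ x in (0 : ℝ)..η, g ((x - s : ℝ) : Circ))
      (g ((-t : ℝ) : Circ) - g ((η - t : ℝ) : Circ)) t := by
  have hcoe : Continuous (fun t : ℝ => (t : Circ)) := AddCircle.continuous_mk' _
  have hg : Continuous (fun x : ℝ => g (x : Circ)) := g.continuous.comp hcoe
  have hP : ∀ y : ℝ, HasDerivAt (fun z : ℝ => ∫ x in (0 : ℝ)..z, g (x : Circ)) (g (y : Circ)) y :=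
    fun y => hg.integral_hasStrictDerivAt 0 y |>.hasDerivAt
  have h1 : ∀ s : ℝ, ∫ x in (0 : ℝ)..η, g ((x - s : ℝ) : Circ) =
      (∫ x in (0 : ℝ)..(η - s), g (x : Circ)) - ∫ x in (0 : ℝ)..(-s), g (x : Circ) := by
    intro s
    rw [intervalIntegral.integral_comp_sub_right (fun x : ℝ => g (x : Circ)) s, zero_sub,
      intervalIntegral.integral_interval_sub_left (hg.intervalIntegrable _ _)
        (hg.intervalIntegrable _ _)]
  simp_rw [h1]
  have ha : HasDerivAt (fun s : ℝ => η - s) (-1) t := by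
    simpa using (hasDerivAt_id t).const_sub η
  have hb : HasDerivAt (fun s : ℝ => -s) (-1) t := by simpa using (hasDerivAt_id t).fun_neg
  have h2 := ((hP (η - t)).comp t ha).fun_sub ((hP (-t)).comp t hb)
  refine h2.congr_deriv ?_
  ring

theorem J_deriv (G : ℝ → C(Circ, ℝ)) (G' : C(Circ, ℝ)) (η t : ℝ) (hG : HasDerivAt G G' t) :
    HasDerivAt (fun s : ℝ => ∫ x in (0 : ℝ)..η, G s ((x - s : ℝ) : Circ))
      (G t ((-t : ℝ) : Circ) - G t ((η - t : ℝ) : Circ) +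
        ∫ x in (0 : ℝ)..η, G' ((x - t : ℝ) : Circ)) t := by
  have hcoe : Continuous (fun t : ℝ => (t : Circ)) := AddCircle.continuous_mk' _
  have hint : ∀ (g : C(Circ, ℝ)) (s : ℝ),
      IntervalIntegrable (fun x : ℝ => g ((x - s : ℝ) : Circ)) volume 0 η := by
    intro g s
    have : Continuous (fun x : ℝ => g ((x - s : ℝ) : Circ)) :=
      g.continuous.comp (hcoe.comp (by fun_prop))
    exact this.intervalIntegrable _ _
  let r : ℝ → C(Circ, ℝ) := fun s => G s - G t - (s - t) • G'
  have hdec : ∀ s : ℝ, ∫ x in (0 : ℝ)..η, G s ((x - s : ℝ) : Circ) =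
      (∫ x in (0 : ℝ)..η, G t ((x - s : ℝ) : Circ)) +
      (s - t) * (∫ x in (0 : ℝ)..η, G' ((x - s : ℝ) : Circ)) +
      ∫ x in (0 : ℝ)..η, r s ((x - s : ℝ) : Circ) := by
    intro s
    rw [← intervalIntegral.integral_const_mul, ← intervalIntegral.integral_add (hint _ _)
      ((hint G' s).const_mul _), ← intervalIntegral.integral_add
      ((hint _ _).add ((hint G' s).const_mul _)) (hint _ _)]
    congr 1
    ext x
    simp [r]
  have hR : HasDerivAt (fun s : ℝ => ∫ x in (0 : ℝ)..η, r s ((x - s : ℝ) : Circ)) 0 t := by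
    rw [hasDerivAt_iff_isLittleO]
    have h0 : r t = 0 := by simp [r]
    have hr : (fun s => r s) =o[𝓝 t] fun s => s - t := by
      have := hasDerivAt_iff_isLittleO.1 hG
      simpa [r] using this
    refine Asymptotics.IsBigO.trans_isLittleO (g := fun s => r s) ?_ hr
    refine Asymptotics.IsBigO.of_bound |η| (Eventually.of_forall fun s => ?_)
    simp only [h0, smul_zero, sub_zero, ContinuousMap.zero_apply, intervalIntegral.integral_zero]
    refine (intervalIntegral.norm_integral_le_of_norm_le_const
      (fun x _ => (r s).norm_coe_le_norm _)).trans ?_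
    rw [sub_zero, mul_comm]
  simp_rw [hdec]
  have hB := ((hasDerivAt_id t).sub_const t).fun_mul (J_deriv_fixed G' η t)
  have := ((J_deriv_fixed (G t) η t).fun_add hB).fun_add hR
  refine this.congr_deriv ?_
  simp

/-- The key identity `Q = ∫ (H + K(Q))`. -/
theorem key_identity (k Kt : ℝ → ℝ) (hk : Continuous k) (hKt : ∀ x, HasDerivAt Kt (k x) x)
    (C₁ D : ℝ) (hkb : ∀ x, |k x| ≤ C₁)
    (Qe : ℝ → ℝ) (hQe : Continuous Qe) (qi : Circ → ℝ)
    (hqi : ∀ x ∈ Ico (0 : ℝ) 1, qi (x : Circ) = Qe x)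
    (G q G' q' : ℝ → C(Circ, ℝ)) (hG : ∀ t, HasDerivAt G (G' t) t)
    (hq : ∀ t, HasDerivAt q (q' t) t) (hq0 : q 0 = 0)
    (hG' : ∀ t, 0 ≤ t → ∀ x, G' t x = k (qi (x + (t : Circ)) + q t (x + (t : Circ))) *
        (G t x - G t (-(t : Circ))))
    (hq' : ∀ t, 0 ≤ t → ∀ x, q' t x = G t (-(t : Circ)) - G t (x - (t : Circ)))
    (hq'b : ∀ t x, |q' t x| ≤ D)
    (η : ℝ) (hη : η ∈ Icc (0 : ℝ) 1)
    (hinit : Qe η = ∫ x in (0 : ℝ)..η, (G 0 (x : Circ) + Kt (Qe x)))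
    (t : ℝ) (ht : 0 ≤ t) :
    Qe η + q t (η : Circ) =
      ∫ x in (0 : ℝ)..η, (G t ((x - t : ℝ) : Circ) + Kt (Qe x + q t (x : Circ))) := by
  have hcoe : Continuous (fun t : ℝ => (t : Circ)) := AddCircle.continuous_mk' _
  have hKc : Continuous Kt := continuous_iff_continuousAt.2 fun x => (hKt x).continuousAt
  have hC₁ : 0 ≤ C₁ := (abs_nonneg _).trans (hkb 0)
  have hqx : ∀ s (x : Circ), HasDerivAt (fun s => q s x) (q' s x) s := by
    intro s x
    exact ((ContinuousMap.evalCLM ℝ x).hasFDerivAt.comp_hasDerivAt s (hq s))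
  have hcQ : ∀ s, Continuous (fun x : ℝ => Qe x + q s (x : Circ)) := fun s =>
    hQe.add ((q s).continuous.comp hcoe)
  have hcG : ∀ s, Continuous (fun x : ℝ => G s ((x - s : ℝ) : Circ)) := fun s =>
    (G s).continuous.comp (hcoe.comp (by fun_prop))
  have hKQ : Continuous (fun x => Kt (Qe x)) := hKc.comp hQe
  have hKQt : Continuous (fun x : ℝ => Kt (Qe x + q t (x : Circ))) := hKc.comp (hcQ t)
  -- derivative of the `K`-integral
  have hI : ∀ s, HasDerivAt (fun s => ∫ x in (0 : ℝ)..η, Kt (Qe x + q s (x : Circ)))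
      (∫ x in (0 : ℝ)..η, k (Qe x + q s (x : Circ)) * q' s (x : Circ)) s := by
    intro s
    refine (intervalIntegral.hasDerivAt_integral_of_dominated_loc_of_deriv_le
      (F := fun s x => Kt (Qe x + q s (x : Circ)))
      (F' := fun s x => k (Qe x + q s (x : Circ)) * q' s (x : Circ))
      (bound := fun _ => C₁ * D) (s := univ) univ_mem ?_ ?_ ?_ ?_ ?_ ?_).2
    · exact Eventually.of_forall fun s => (hKc.comp (hcQ s)).aestronglyMeasurable
    · exact (hKc.comp (hcQ s)).intervalIntegrable _ _
    · exact ((hk.comp (hcQ s)).mul ((q' s).continuous.comp hcoe)).aestronglyMeasurable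
    · refine Eventually.of_forall fun x _ s _ => ?_
      rw [norm_mul]
      exact mul_le_mul (hkb _) (hq'b _ _) (norm_nonneg _) hC₁
    · exact intervalIntegrable_const
    · refine Eventually.of_forall fun x _ s _ => ?_
      exact (hKt _).comp s ((hqx s (x : Circ)).const_add (Qe x))
  let E : ℝ → ℝ := fun s => Qe η + q s (η : Circ) -
    (∫ x in (0 : ℝ)..η, G s ((x - s : ℝ) : Circ)) -
    ∫ x in (0 : ℝ)..η, Kt (Qe x + q s (x : Circ))
  have hE : ∀ s, 0 ≤ s → HasDerivAt E 0 s := by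
    intro s hs
    have h := (((hqx s (η : Circ)).const_add (Qe η)).fun_sub (J_deriv G (G' s) η s (hG s))).fun_sub
      (hI s)
    have e1 : ∫ x in (0 : ℝ)..η, G' s ((x - s : ℝ) : Circ) =
        -∫ x in (0 : ℝ)..η, k (Qe x + q s (x : Circ)) * q' s (x : Circ) := by
      rw [← intervalIntegral.integral_neg]
      refine intervalIntegral.integral_congr_ae ?_
      have hne : ∀ᵐ x : ℝ, x ≠ 1 := by
        simp [ae_iff]
      filter_upwards [hne] with x hx1 hx
      rw [uIoc_of_le hη.1] at hx
      have hxI : x ∈ Ico (0 : ℝ) 1 := ⟨hx.1.le, lt_of_le_of_ne (hx.2.trans hη.2) hx1⟩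
      rw [hG' s hs, hq' s hs, AddCircle.coe_sub, sub_add_cancel, hqi x hxI]
      ring
    refine h.congr_deriv ?_
    rw [e1, hq' s hs, AddCircle.coe_sub, AddCircle.coe_neg]
    ring
  have hconst : E t = E 0 := by
    refine constant_of_has_deriv_right_zero (f := E) (a := 0) (b := t)
      (fun s hs => (hE s hs.1).continuousAt.continuousWithinAt)
      (fun s hs => (hE s hs.1).hasDerivWithinAt) t (right_mem_Icc.2 ht)
  have hE0 : E 0 = 0 := by
    have hc0 := hcG 0
    simp only [sub_zero] at hc0
    simp only [E, hq0, ContinuousMap.zero_apply, add_zero, sub_zero]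
    rw [hinit, intervalIntegral.integral_add (hc0.intervalIntegrable _ _)
      (hKQ.intervalIntegrable _ _)]
    ring
  rw [hE0] at hconst
  rw [intervalIntegral.integral_add ((hcG t).intervalIntegrable _ _)
      (hKQt.intervalIntegrable _ _)]
  simp only [E] at hconst
  linarith

/-- Truncation of `K` outside `[0, ΦF]`. -/
theorem trunc_K (K : ℝ → ℝ) (ΦF : ℝ) (hΦF : 0 < ΦF) (hK : KAssump K ΦF)
    (hK' : ∀ φ ∈ Icc (0 : ℝ) ΦF, deriv K φ ≤ 0) :
    ∃ (k Kt : ℝ → ℝ) (C₁ : ℝ) (C₂ : NNReal), LipschitzWith C₂ k ∧ (∀ x, |k x| ≤ C₁) ∧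
      (∀ x, k x ≤ 0) ∧ (∀ x, HasDerivAt Kt (k x) x) ∧ ∀ x ∈ Icc (0 : ℝ) ΦF, Kt x = K x := by
  obtain ⟨C₁, hC₁⟩ := hK.bdd1
  obtain ⟨C₂, hC₂⟩ := hK.bdd2
  have hC₂0 : 0 ≤ C₂ := (abs_nonneg _).trans (hC₂ 0)
  have hKd : Differentiable ℝ K := hK.smooth.differentiable (by norm_num)
  have hK1 : ContDiff ℝ 1 (deriv K) := by
    have := hK.smooth
    rw [show (2 : WithTop ℕ∞) = 1 + 1 by norm_num, contDiff_succ_iff_deriv] at this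
    exact this.2.2
  have hlip : LipschitzWith ⟨C₂, hC₂0⟩ (deriv K) :=
    lipschitzWith_of_nnnorm_deriv_le (hK1.differentiable (by norm_num)) fun x => hC₂ x
  let pr : ℝ → ℝ := fun x => max 0 (min ΦF x)
  have hpr : LipschitzWith 1 pr := (LipschitzWith.id.const_min ΦF).const_max 0
  have hprm : ∀ x, pr x ∈ Icc (0 : ℝ) ΦF := fun x =>
    ⟨le_max_left _ _, max_le hΦF.le (min_le_left _ _)⟩
  have hpre : ∀ x ∈ Icc (0 : ℝ) ΦF, pr x = x := fun x hx => by
    simp [pr, hx.1, hx.2]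
  have hkc : Continuous (fun x => deriv K (pr x)) := hlip.continuous.comp hpr.continuous
  refine ⟨fun x => deriv K (pr x), fun x => K 0 + ∫ y in (0 : ℝ)..x, deriv K (pr y), C₁, _,
    hlip.comp hpr, fun x => hC₁ _, fun x => hK' _ (hprm x), fun x => ?_, fun x hx => ?_⟩
  · exact (hkc.integral_hasStrictDerivAt 0 x).hasDerivAt.const_add _
  · have : ∫ y in (0 : ℝ)..x, deriv K (pr y) = ∫ y in (0 : ℝ)..x, deriv K y := by
      refine intervalIntegral.integral_congr fun y hy => ?_
      rw [uIcc_of_le hx.1] at hy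
      simp only [hpre y ⟨hy.1, hy.2.trans hx.2⟩]
    simp only [this]
    rw [intervalIntegral.integral_deriv_eq_sub (fun y _ => hKd y)
      (hlip.continuous.intervalIntegrable _ _)]
    ring

/-- Profiles solving `f' = h + Kt(f)` stay in `[0, ΦF]` and are increasing. -/
theorem profile_bounds (k Kt : ℝ → ℝ) (ΦF m : ℝ) (hm : 0 < m) (hΦF : 0 < ΦF)
    (hk : ∀ x, k x ≤ 0) (hKt : ∀ x, HasDerivAt Kt (k x) x) (hpos : 0 < Kt ΦF)
    (f h : ℝ → ℝ) (hf : ∀ x ∈ Icc (0 : ℝ) 1, HasDerivWithinAt f (h x + Kt (f x)) (Icc 0 1) x)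
    (hh : ∀ x ∈ Icc (0 : ℝ) 1, m ≤ h x) (h0 : f 0 = 0) (h1 : f 1 = ΦF) :
    MonotoneOn f (Icc 0 1) ∧ ∀ x ∈ Icc (0 : ℝ) 1, f x ∈ Icc 0 ΦF := by
  have hfc : ContinuousOn f (Icc 0 1) := fun x hx => (hf x hx).continuousWithinAt
  have hKa : Antitone Kt := antitone_of_hasDerivAt_nonpos hKt hk
  have hle : ∀ x ∈ Icc (0 : ℝ) 1, f x ≤ ΦF := by
    intro x0 hx0
    by_contra! hcon
    have hev : ∀ᶠ y in 𝓝 ΦF, 0 < Kt y + m :=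
      ((hKt ΦF).continuousAt.add continuousAt_const).eventually (lt_mem_nhds (add_pos hpos hm))
    obtain ⟨δ, hδ, hδ'⟩ := Metric.eventually_nhds_iff.1 hev
    set c := min (f x0) (ΦF + δ / 2) with hc
    have hcΦ : ΦF < c := lt_min hcon (by linarith)
    have hKc : 0 < Kt c + m := hδ' (by
      rw [Real.dist_eq, abs_lt]
      have := min_le_right (f x0) (ΦF + δ / 2)
      constructor <;> linarith)
    have := image_le_of_deriv_right_lt_deriv_boundary (f := fun x => -f x)
      (f' := fun x => -(h x + Kt (f x))) (a := x0) (b := 1)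
      (B := fun _ => -c) (B' := fun _ => 0)
      ((hfc.mono (Icc_subset_Icc_left hx0.1)).neg)
      (fun x hx => ((hf x ⟨hx0.1.trans hx.1, hx.2.le⟩).mono_of_mem_nhdsWithin
        (Icc_mem_nhdsGE_of_mem ⟨hx0.1.trans hx.1, hx.2⟩)).fun_neg)
      (by simp [hc]) (fun x => hasDerivAt_const _ _) (fun x hx he => by
        have hh' := hh x ⟨hx0.1.trans hx.1, hx.2.le⟩
        have : f x = c := by linarith
        rw [this]; linarith) (right_mem_Icc.2 hx0.2)
    rw [h1] at this
    linarith
  have hmono : MonotoneOn f (Icc 0 1) := by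
    refine monotoneOn_of_hasDerivWithinAt_nonneg (f' := fun x => h x + Kt (f x)) (convex_Icc 0 1)
      hfc (fun x hx => (hf x (interior_subset hx)).mono interior_subset) (fun x hx => ?_)
    have := hh x (interior_subset hx)
    have := hKa (hle x (interior_subset hx))
    linarith
  refine ⟨hmono, fun x hx => ⟨?_, hle x hx⟩⟩
  rw [← h0]
  exact hmono (left_mem_Icc.2 zero_le_one) hx hx.1

/-- Facts about `Hinit`. -/
theorem Hinit_facts (K : ℝ → ℝ) (ΦF : ℝ) (hK : KAssump K ΦF)
    (Qinit : ℝ → ℝ) (hA2 : A2 K ΦF Qinit) (hH : ∀ η ∈ Icc (0 : ℝ) 1, 0 < Hinit K Qinit η) :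
    ContinuousOn (Hinit K Qinit) (Icc 0 1) ∧ Hinit K Qinit 0 = Hinit K Qinit 1 ∧
    0 < sInf (Hinit K Qinit '' Icc (0 : ℝ) 1) ∧
    ∀ x ∈ Icc (0 : ℝ) 1, sInf (Hinit K Qinit '' Icc (0 : ℝ) 1) ≤ Hinit K Qinit x ∧
      Hinit K Qinit x ≤ sSup (Hinit K Qinit '' Icc (0 : ℝ) 1) := by
  have hc : ContinuousOn (Hinit K Qinit) (Icc 0 1) :=
    (hA2.reg.continuousOn_derivWithin (uniqueDiffOn_Icc zero_lt_one) le_rfl).sub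
      (hK.smooth.continuous.comp_continuousOn hA2.reg.continuousOn)
  have hcomp := isCompact_Icc.image_of_continuousOn hc
  have hne : (Hinit K Qinit '' Icc (0 : ℝ) 1).Nonempty := (nonempty_Icc.2 zero_le_one).image _
  refine ⟨hc, ?_, ?_, fun x hx => ⟨csInf_le hcomp.bddBelow (mem_image_of_mem _ hx),
    le_csSup hcomp.bddAbove (mem_image_of_mem _ hx)⟩⟩
  · have := hA2.compat
    simp only [Hinit, hA2.init0, hA2.init1]
    linarith
  · obtain ⟨x, hx, hxe⟩ := hcomp.sInf_mem hne
    rw [← hxe]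
    exact hH x hx

theorem Ico0_top : Ico0 ⊤ = Ici (0 : ℝ) := by
  ext τ; simp [Ico0]

/-- Existence part. -/
theorem exist_sol (ΦF : ℝ) (hΦF : 0 < ΦF) (K : ℝ → ℝ) (hK : KAssump K ΦF)
    (hK' : ∀ φ ∈ Icc (0 : ℝ) ΦF, deriv K φ ≤ 0)
    (Qinit : ℝ → ℝ) (hA2 : A2 K ΦF Qinit)
    (hH : ∀ η ∈ Icc (0 : ℝ) 1, 0 < Hinit K Qinit η) :
    ∃ (Q : ℝ → ℝ → ℝ) (u : ℝ → ℝ), IsQSol K ΦF ⊤ Qinit Q (fun t => 1 / u t) ∧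
      ∀ τ : ℝ, 0 ≤ τ → sInf (Hinit K Qinit '' Icc (0 : ℝ) 1) ≤ u τ ∧
        u τ ≤ sSup (Hinit K Qinit '' Icc (0 : ℝ) 1) := by
  obtain ⟨k, Kt, C₁, C₂, hkL, hkb, hk0, hKt, hKtK⟩ := trunc_K K ΦF hΦF hK hK'
  obtain ⟨hHc, hH01, hmpos, hmM⟩ := Hinit_facts K ΦF hK Qinit hA2 hH
  set m := sInf (Hinit K Qinit '' Icc (0 : ℝ) 1) with hm
  set M := sSup (Hinit K Qinit '' Icc (0 : ℝ) 1) with hM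
  have hmleM : m ≤ M := by
    have := hmM 0 (left_mem_Icc.2 zero_le_one)
    exact this.1.trans this.2
  have hcoe : Continuous (fun t : ℝ => (t : Circ)) := AddCircle.continuous_mk' _
  have h10 : ((1 : ℝ) : Circ) = ((0 : ℝ) : Circ) := by
    rw [AddCircle.coe_period (1 : ℝ)]; simp
  -- data on the circle
  let G₀ : C(Circ, ℝ) := ⟨AddCircle.liftIco 1 0 (Hinit K Qinit),
    AddCircle.liftIco_zero_continuous hH01 hHc⟩
  have hG₀ : ∀ x ∈ Icc (0 : ℝ) 1, G₀ (x : Circ) = Hinit K Qinit x := by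
    intro x hx
    rcases eq_or_lt_of_le hx.2 with h | h
    · rw [h, h10, ← hH01]
      exact AddCircle.liftIco_zero_coe_apply (f := Hinit K Qinit) (p := (1 : ℝ))
        ⟨le_rfl, zero_lt_one⟩
    · exact AddCircle.liftIco_zero_coe_apply (f := Hinit K Qinit) (p := (1 : ℝ)) ⟨hx.1, h⟩
  have hG₀b : ∀ x : Circ, m ≤ G₀ x ∧ G₀ x ≤ M := by
    intro x
    have hx : x ∈ ((↑) : ℝ → Circ) '' Ico 0 (0 + 1) := by
      rw [AddCircle.coe_image_Ico_eq]; trivial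
    obtain ⟨y, hy, rfl⟩ := hx
    rw [zero_add] at hy
    rw [hG₀ y (Ico_subset_Icc_self hy)]
    exact hmM y (Ico_subset_Icc_self hy)
  let qi : Circ → ℝ := AddCircle.liftIco 1 0 Qinit
  have hqi : ∀ x ∈ Ico (0 : ℝ) 1, qi (x : Circ) = Qinit x := fun x hx =>
    AddCircle.liftIco_zero_coe_apply hx
  have hqic : ∀ θ : Circ, θ ≠ 0 → ContinuousAt qi θ := by
    intro θ hθ
    have h1 : ContinuousAt (AddCircle.equivIco (1 : ℝ) 0) θ :=
      AddCircle.continuousAt_equivIco 1 0 (by simpa using hθ)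
    have h2 : Continuous (domRestrict (Ico (0 : ℝ) (0 + 1)) Qinit) := by
      rw [← continuousOn_iff_continuous_domRestrict]
      refine hA2.reg.continuousOn.mono ?_
      rw [zero_add]
      exact Ico_subset_Icc_self
    exact ContinuousAt.comp h2.continuousAt h1
  let c : ℝ → ℝ := fun x => max m (min M x)
  have hcL : LipschitzWith 1 c := (LipschitzWith.id.const_min M).const_max m
  have hcm : ∀ x, m ≤ c x ∧ c x ≤ M := fun x =>
    ⟨le_max_left _ _, max_le hmleM (min_le_left _ _)⟩
  have hcid : ∀ x, m ≤ x → x ≤ M → c x = x := fun x h1 h2 => by simp [c, h1, h2]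
  have hcb : ∀ x y, |c x - c y| ≤ M - m := fun x y => by
    rw [abs_le]
    constructor <;> linarith [(hcm x).1, (hcm x).2, (hcm y).1, (hcm y).2]
  obtain ⟨G, q, hG0, hq0, G', q', hGd, hqd, hG', hq'⟩ :=
    moving_frame k c qi C₁ C₂ (M - m) hkL hkb hcL hcb hqic G₀
  have hGx : ∀ t (x : Circ), HasDerivAt (fun s => G s x) (G' t x) t := by
    intro t x
    exact ((ContinuousMap.evalCLM ℝ x).hasFDerivAt.comp_hasDerivAt t (hGd t))
  have hqx : ∀ t (x : Circ), HasDerivAt (fun s => q s x) (q' t x) t := by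
    intro t x
    exact ((ContinuousMap.evalCLM ℝ x).hasFDerivAt.comp_hasDerivAt t (hqd t))
  have hGM : ∀ t, 0 ≤ t → ∀ x, G t x ≤ M := by
    intro t ht x
    refine barrier_le (fun s => G s x) (fun s => G' s x) M (fun s => hGx s x)
      (by simp only [hG0]; exact (hG₀b x).2) (fun s hs hlt => ?_) t ht
    rw [hG']
    refine mul_nonpos_of_nonpos_of_nonneg (hk0 _) ?_
    have : c (G s x) = M := by simp [c, hlt.le, hmleM]
    linarith [(hcm (G s (-(s : Circ)))).2]
  have hGm : ∀ t, 0 ≤ t → ∀ x, m ≤ G t x := by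
    intro t ht x
    have := barrier_le (fun s => -G s x) (fun s => -G' s x) (-m) (fun s => (hGx s x).fun_neg)
      (by simp only [hG0]; linarith [(hG₀b x).1]) (fun s hs hlt => ?_) t ht
    · linarith
    rw [hG', neg_nonpos]
    refine mul_nonneg_of_nonpos_of_nonpos (hk0 _) ?_
    have hlt' : G s x ≤ m := by linarith
    have : c (G s x) = m := by simp [c, hlt']
    linarith [(hcm (G s (-(s : Circ)))).1]
  have hcG : ∀ t, 0 ≤ t → ∀ x, c (G t x) = G t x := fun t ht x =>
    hcid _ (hGm t ht x) (hGM t ht x)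
  have hG'' : ∀ t, 0 ≤ t → ∀ x, G' t x = k (qi (x + (t : Circ)) + q t (x + (t : Circ))) *
        (G t x - G t (-(t : Circ))) := fun t ht x => by
    rw [hG', hcG t ht, hcG t ht]
  have hq'' : ∀ t, 0 ≤ t → ∀ x, q' t x = G t (-(t : Circ)) - G t (x - (t : Circ)) :=
    fun t ht x => by rw [hq', hcG t ht, hcG t ht]
  -- extension of the initial datum
  let Qe : ℝ → ℝ := fun x => Qinit (max 0 (min 1 x))
  have hQe : Continuous Qe := hA2.reg.continuousOn.comp_continuous (by fun_prop)
    (fun x => ⟨le_max_left _ _, max_le zero_le_one (min_le_left _ _)⟩)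
  have hQee : ∀ x ∈ Icc (0 : ℝ) 1, Qe x = Qinit x := fun x hx => by simp [Qe, hx.1, hx.2]
  have hQr : ∀ x ∈ Icc (0 : ℝ) 1, Qinit x ∈ Icc 0 ΦF := by
    intro x hx
    constructor
    · rw [← hA2.init0]; exact hA2.mono (left_mem_Icc.2 zero_le_one) hx hx.1
    · rw [← hA2.init1]; exact hA2.mono hx (right_mem_Icc.2 zero_le_one) hx.2
  have hKc : Continuous Kt := continuous_iff_continuousAt.2 fun x => (hKt x).continuousAt
  have hdiff : DifferentiableOn ℝ Qinit (Icc 0 1) := hA2.reg.differentiableOn (by norm_num)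
  have hinit : ∀ η ∈ Icc (0 : ℝ) 1,
      Qe η = ∫ x in (0 : ℝ)..η, (G 0 (x : Circ) + Kt (Qe x)) := by
    intro η hη
    have hcont : Continuous (fun x : ℝ => G 0 (x : Circ) + Kt (Qe x)) :=
      ((G 0).continuous.comp hcoe).add (hKc.comp hQe)
    rw [intervalIntegral.integral_eq_sub_of_hasDerivAt_of_le hη.1 (f := Qe)
      hQe.continuousOn (fun x hx => ?_) (hcont.intervalIntegrable _ _)]
    · rw [hQee 0 (left_mem_Icc.2 zero_le_one), hA2.init0, sub_zero]
    · have hx' : x ∈ Ioo (0 : ℝ) 1 := ⟨hx.1, hx.2.trans_le hη.2⟩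
      have hxI := Ioo_subset_Icc_self hx'
      have hnh : Icc (0 : ℝ) 1 ∈ 𝓝 x := Icc_mem_nhds hx'.1 hx'.2
      have h1 := ((hdiff x hxI).hasDerivWithinAt).hasDerivAt hnh
      have h2 : HasDerivAt Qe (derivWithin Qinit (Icc 0 1) x) x := by
        refine h1.congr_of_eventuallyEq ?_
        filter_upwards [hnh] with y hy using hQee y hy
      refine h2.congr_deriv ?_
      rw [hG0, hG₀ x hxI, hQee x hxI, hKtK _ (hQr x hxI), Hinit]
      ring
  have hid : ∀ t, 0 ≤ t → ∀ η ∈ Icc (0 : ℝ) 1, Qe η + q t (η : Circ) =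
      ∫ x in (0 : ℝ)..η, (G t ((x - t : ℝ) : Circ) + Kt (Qe x + q t (x : Circ))) := by
    intro t ht η hη
    exact key_identity k Kt hkL.continuous hKt C₁ (M - m) hkb Qe hQe qi
      (fun x hx => by rw [hqi x hx, hQee x (Ico_subset_Icc_self hx)]) G q G' q' hGd hqd hq0
      hG'' hq'' (fun t x => by rw [hq']; exact hcb _ _) η hη (hinit η hη) t ht
  let Q : ℝ → ℝ → ℝ := fun t η => Qe η + q t (η : Circ)
  let H : ℝ → ℝ → ℝ := fun t η => G t ((η - t : ℝ) : Circ)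
  let u : ℝ → ℝ := fun t => G t (-(t : Circ))
  have hH1 : ∀ t, H t 1 = u t := fun t => by
    simp only [H, u]; rw [AddCircle.coe_sub, h10]; simp
  have hQ0 : ∀ t, 0 ≤ t → Q t 0 = 0 := fun t ht => by
    simp only [Q]; rw [hid t ht 0 (left_mem_Icc.2 zero_le_one)]; simp
  have hQ1 : ∀ t, 0 ≤ t → Q t 1 = ΦF := fun t ht => by
    have h0 := hQ0 t ht
    simp only [Q] at h0 ⊢
    rw [hQee 0 (left_mem_Icc.2 zero_le_one), hA2.init0, zero_add] at h0
    rw [h10, h0, hQee 1 (right_mem_Icc.2 zero_le_one), hA2.init1, add_zero]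
  have hQη : ∀ t, 0 ≤ t → ∀ η ∈ Icc (0 : ℝ) 1,
      HasDerivWithinAt (Q t) (H t η + Kt (Q t η)) (Icc 0 1) η := by
    intro t ht η hη
    have hcont : Continuous (fun x : ℝ => H t x + Kt (Q t x)) :=
      ((G t).continuous.comp (hcoe.comp (by fun_prop))).add
        (hKc.comp (hQe.add ((q t).continuous.comp hcoe)))
    have h := (hcont.integral_hasStrictDerivAt 0 η).hasDerivAt.hasDerivWithinAt (s := Icc 0 1)
    exact h.congr (fun y hy => hid t ht y hy) (hid t ht η hη)
  have hprof : ∀ t, 0 ≤ t → MonotoneOn (Q t) (Icc 0 1) ∧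
      ∀ x ∈ Icc (0 : ℝ) 1, Q t x ∈ Icc 0 ΦF := fun t ht =>
    profile_bounds k Kt ΦF m hmpos hΦF hk0 hKt
      (by rw [hKtK ΦF ⟨hΦF.le, le_rfl⟩]; exact hK.pos ΦF ⟨hΦF.le, le_rfl⟩)
      (Q t) (H t) (hQη t ht) (fun x _ => hGm t ht _) (hQ0 t ht) (hQ1 t ht)
  have hQη' : ∀ t ∈ Ici (0 : ℝ), ∀ η ∈ Icc (0 : ℝ) 1,
      HasDerivWithinAt (Q t) (H t η + K (Q t η)) (Icc 0 1) η := fun t ht η hη => by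
    rw [← hKtK _ ((hprof t ht).2 η hη)]; exact hQη t ht η hη
  have hQτ : ∀ t ∈ Ici (0 : ℝ), ∀ η ∈ Icc (0 : ℝ) 1,
      HasDerivWithinAt (fun s => Q s η) (u t - H t η) (Ici 0) t := fun t ht η hη => by
    have h := ((hqx t (η : Circ)).const_add (Qe η)).hasDerivWithinAt (s := Ici 0)
    rw [hq'' t ht, ← AddCircle.coe_sub] at h
    exact h
  have hGc : Continuous G := continuous_iff_continuousAt.2 fun x => (hGd x).continuousAt
  have hqc : Continuous q := continuous_iff_continuousAt.2 fun x => (hqd x).continuousAt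
  have hHcont : Continuous (Function.uncurry H) :=
    (hGc.comp continuous_fst).eval (hcoe.comp (continuous_snd.sub continuous_fst))
  have hQcont : Continuous (Function.uncurry Q) :=
    (hQe.comp continuous_snd).add
      ((hqc.comp continuous_fst).eval (hcoe.comp continuous_snd))
  have hucont : Continuous u := hGc.eval hcoe.neg
  have hum : ∀ t, 0 ≤ t → m ≤ u t := fun t ht => hGm t ht _
  have hbcont : Continuous (Function.uncurry fun t η => H t η + K (Q t η)) :=
    hHcont.add (hK.smooth.continuous.comp hQcont)
  have hacont : Continuous (Function.uncurry fun t η => u t - H t η) :=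
    (hucont.comp continuous_fst).sub hHcont
  have hpτ : ∀ t ∈ Ici (0 : ℝ), ∀ η ∈ Icc (0 : ℝ) 1, pdTau Q t η = u t - H t η :=
    fun t ht η hη => (hQτ t ht η hη).derivWithin (uniqueDiffOn_Ici 0 t ht)
  have hpη : ∀ t ∈ Ici (0 : ℝ), ∀ η ∈ Icc (0 : ℝ) 1, pdEta Q t η = H t η + K (Q t η) :=
    fun t ht η hη => (hQη' t ht η hη).derivWithin (uniqueDiffOn_Icc zero_lt_one η hη)
  have hone : (1 : ℝ) ∈ Icc (0 : ℝ) 1 := right_mem_Icc.2 zero_le_one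
  refine ⟨Q, u, ?_, fun t ht => ⟨hGm t ht _, hGM t ht _⟩⟩
  refine ⟨hA2.reg, hA2.mono, hA2.init0, hA2.init1, hA2.deriv1, ?_, ?_, ?_, ?_, ?_, ?_, ?_, ?_, ?_⟩
  all_goals try rw [Ico0_top]
  · exact contDiffOn_of_partials Q _ _ hacont.continuousOn hbcont.continuousOn hQτ hQη'
  · exact fun t ht => (hprof t ht).1
  · exact continuousOn_const.div hucont.continuousOn
      (fun t ht => (hmpos.trans_le (hum t ht)).ne')
  · exact fun t ht => one_div_pos.2 (hmpos.trans_le (hum t ht))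
  · intro t ht η hη
    rw [hpτ t ht η (Ioo_subset_Icc_self hη), hpη t ht η (Ioo_subset_Icc_self hη), one_div_one_div]
    ring
  · exact hQ0
  · intro t ht
    rw [hpη t ht 1 hone, one_div_one_div, hH1, hQ1 t ht]
    ring
  · intro η hη
    simp only [Q, hq0, ContinuousMap.zero_apply, add_zero]
    exact hQee η hη
  · intro t ht
    rw [hpη t ht 1 hone, hH1, hQ1 t ht]
    linarith [hum t ht]

/-- Facts about an arbitrary global classical solution. -/
theorem sol_facts (K : ℝ → ℝ) (ΦF : ℝ) (hK : KAssump K ΦF) (Qinit : ℝ → ℝ)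
    (Q : ℝ → ℝ → ℝ) (N : ℝ → ℝ) (h : IsQSol K ΦF ⊤ Qinit Q N) :
    (∀ τ, 0 ≤ τ → ∀ η ∈ Icc (0 : ℝ) 1, HasDerivWithinAt (fun s => Q (τ + s) (η + s))
      (1 / N τ + K (Q τ η)) (Icc (-min τ η) 0) 0) ∧ ∀ τ, 0 ≤ τ → Q τ 1 = ΦF := by
  have hreg := h.reg
  have hpde := h.pde
  have hNdef := h.Ndef
  rw [Ico0_top] at hreg hpde hNdef
  set S := Ici (0 : ℝ) ×ˢ Icc (0 : ℝ) 1 with hS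
  let F := fderivWithin ℝ (Function.uncurry Q) S
  have hFc : ContinuousOn F S := hreg.continuousOn_fderivWithin uniqueDiffOn_strip le_rfl
  have hF : ∀ p ∈ S, HasFDerivWithinAt (Function.uncurry Q) (F p) S p := fun p hp =>
    (hreg.differentiableOn (by norm_num) p hp).hasFDerivWithinAt
  have hτ : ∀ τ ∈ Ici (0 : ℝ), ∀ η ∈ Icc (0 : ℝ) 1,
      HasDerivWithinAt (fun s => Q s η) (F (τ, η) (1, 0)) (Ici 0) τ := by
    intro τ ht η hη
    have hc : HasDerivWithinAt (fun s : ℝ => (s, η)) ((1 : ℝ), (0 : ℝ)) (Ici 0) τ :=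
      (hasDerivWithinAt_id τ _).prodMk (hasDerivWithinAt_const τ _ η)
    have hp : (τ, η) ∈ S := ⟨ht, hη⟩
    exact (hF (τ, η) hp).comp_hasDerivWithinAt τ hc (fun s hs => mk_mem_prod hs hη)
  have hη : ∀ τ ∈ Ici (0 : ℝ), ∀ η ∈ Icc (0 : ℝ) 1,
      HasDerivWithinAt (fun x => Q τ x) (F (τ, η) (0, 1)) (Icc 0 1) η := by
    intro τ ht η hη
    have hc : HasDerivWithinAt (fun x : ℝ => (τ, x)) ((0 : ℝ), (1 : ℝ)) (Icc 0 1) η :=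
      (hasDerivWithinAt_const η _ τ).prodMk (hasDerivWithinAt_id η _)
    have hp : (τ, η) ∈ S := ⟨ht, hη⟩
    exact (hF (τ, η) hp).comp_hasDerivWithinAt η hc (fun s hs => mk_mem_prod ht hs)
  have hpτ : ∀ t ∈ Ici (0 : ℝ), ∀ η ∈ Icc (0 : ℝ) 1, pdTau Q t η = F (t, η) (1, 0) :=
    fun t ht η hη => (hτ t ht η hη).derivWithin (uniqueDiffOn_Ici 0 t ht)
  have hpη : ∀ t ∈ Ici (0 : ℝ), ∀ η ∈ Icc (0 : ℝ) 1, pdEta Q t η = F (t, η) (0, 1) :=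
    fun t ht x hx => (hη t ht x hx).derivWithin (uniqueDiffOn_Icc zero_lt_one x hx)
  have hsum : ∀ p, F p (1, 0) + F p (0, 1) = F p (1, 1) := fun p => by
    rw [← map_add]; simp
  have hext : ∀ τ ∈ Ici (0 : ℝ), ∀ η ∈ Icc (0 : ℝ) 1, F (τ, η) (1, 1) = 1 / N τ + K (Q τ η) := by
    intro τ ht
    have hmap : ContinuousOn (fun η : ℝ => (τ, η)) (Icc 0 1) := by fun_prop
    have hmaps : MapsTo (fun η : ℝ => (τ, η)) (Icc 0 1) S := fun η hη => ⟨ht, hη⟩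
    refine EqOn.of_subset_closure (s := Ioo 0 1) (fun η hη => ?_) ?_ ?_ Ioo_subset_Icc_self
      (by rw [closure_Ioo zero_ne_one])
    · have hη' := Ioo_subset_Icc_self hη
      rw [← hsum, ← hpτ τ ht η hη', ← hpη τ ht η hη']
      exact hpde τ ht η hη
    · exact (hFc.comp hmap hmaps).clm_apply continuousOn_const
    · exact continuousOn_const.add
        (hK.smooth.continuous.comp_continuousOn (hreg.continuousOn.comp hmap hmaps))
  refine ⟨fun τ ht η hη => ?_, fun τ ht => ?_⟩
  · rw [← hext τ ht η hη]
    have hc : HasDerivWithinAt (fun s : ℝ => (τ + s, η + s)) ((1 : ℝ), (1 : ℝ))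
        (Icc (-min τ η) 0) 0 :=
      ((hasDerivWithinAt_id 0 _).const_add τ).prodMk ((hasDerivWithinAt_id 0 _).const_add η)
    refine (hF (τ, η) ⟨ht, hη⟩).comp_hasDerivWithinAt_of_eq 0 hc (fun s hs => ?_) (by simp)
    have h1 := min_le_left τ η
    have h2 := min_le_right τ η
    have h3 := hs.1
    have h4 := hs.2
    have h5 := hη.2
    refine ⟨?_, ?_, ?_⟩
    · simp only [mem_Ici]; linarith
    · simp only; linarith
    · simp only; linarith
  · obtain ⟨L, hL⟩ := hK.bdd1
    have hone : (1 : ℝ) ∈ Icc (0 : ℝ) 1 := right_mem_Icc.2 zero_le_one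
    have hlip : ∀ x y, |K x - K y| ≤ L * |x - y| := fun x y =>
      Convex.norm_image_sub_le_of_norm_deriv_le (s := univ)
        (fun x _ => hK.smooth.differentiable (by norm_num) x) (fun x _ => hL x) convex_univ
        trivial trivial
    have hd : ∀ s ∈ Ici (0 : ℝ),
        HasDerivWithinAt (fun s => Q s 1 - ΦF) (K (Q s 1) - K ΦF) (Ici 0) s := by
      intro s hs
      refine ((hτ s hs 1 hone).sub_const ΦF).congr_deriv ?_
      have h1 := hext s hs 1 hone
      rw [← hsum, ← hpη s hs 1 hone] at h1
      have h2 := hNdef s hs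
      linarith
    have := eq_zero_of_abs_deriv_le_mul_abs_self_of_eq_zero_right (f := fun s => Q s 1 - ΦF)
      (f' := fun s => K (Q s 1) - K ΦF) (K := L) (a := 0) (b := τ)
      (fun s hs => ((hd s hs.1).continuousWithinAt).mono Icc_subset_Ici_self)
      (fun s hs => (hd s hs.1).mono (Ici_subset_Ici.2 hs.1))
      (by rw [h.init 1 hone, h.init1, sub_self])
      (fun s hs => hlip _ _) τ (right_mem_Icc.2 ht)
    linarith

/-- A derivative at a right-endpoint maximum is nonnegative. -/
theorem deriv_nonneg_of_max_right (ψ : ℝ → ℝ) (d r : ℝ) (hr : 0 < r)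
    (hd : HasDerivWithinAt ψ d (Icc (-r) 0) 0) (hmax : ∀ s ∈ Icc (-r) 0, ψ s ≤ ψ 0) : 0 ≤ d := by
  have hd' : HasDerivWithinAt ψ d (Ico (-r) 0) 0 := hd.mono Ico_subset_Icc_self
  rw [hasDerivWithinAt_iff_tendsto_slope' (by simp)] at hd'
  have : (𝓝[Ico (-r) 0] (0 : ℝ)).NeBot := by
    rw [← mem_closure_iff_nhdsWithin_neBot, closure_Ico (by linarith)]
    exact ⟨by linarith, le_rfl⟩
  refine ge_of_tendsto hd' ?_
  filter_upwards [self_mem_nhdsWithin] with s hs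
  rw [slope_def_field]
  exact div_nonneg_of_nonpos (by linarith [hmax s ⟨hs.1, hs.2.le⟩]) (by linarith [hs.2])

/-- Maximum principle for periodic transport with nonlocal source. -/
theorem max_principle (P : ℝ → ℝ → ℝ) (W : ℝ → ℝ) (R : ℝ → ℝ → ℝ) (L : ℝ) (hL : 0 ≤ L)
    (hP : ContinuousOn (Function.uncurry P) (Ici (0 : ℝ) ×ˢ Icc (0 : ℝ) 1))
    (hP0 : ∀ τ, 0 ≤ τ → P τ 0 = -W τ) (hP1 : ∀ τ, 0 ≤ τ → P τ 1 = -W τ)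
    (hPi : ∀ η ∈ Icc (0 : ℝ) 1, P 0 η = 0)
    (hd : ∀ τ, 0 ≤ τ → ∀ η ∈ Icc (0 : ℝ) 1, HasDerivWithinAt (fun s => P (τ + s) (η + s))
      (R τ η) (Icc (-min τ η) 0) 0)
    (hR : ∀ τ, 0 ≤ τ → ∀ η ∈ Icc (0 : ℝ) 1, |R τ η| ≤ L * (|P τ η| + |W τ|))
    (T : ℝ) (hT : 0 ≤ T) (x : ℝ) (hx : x ∈ Icc (0 : ℝ) 1) : P T x = 0 := by
  let l := 2 * L + 1
  let E : ℝ × ℝ → ℝ := fun p => Real.exp (-(l * p.1)) * |P p.1 p.2|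
  have hsub : Icc (0 : ℝ) T ×ˢ Icc (0 : ℝ) 1 ⊆ Ici (0 : ℝ) ×ˢ Icc (0 : ℝ) 1 :=
    prod_mono Icc_subset_Ici_self subset_rfl
  have hEc : ContinuousOn E (Icc (0 : ℝ) T ×ˢ Icc (0 : ℝ) 1) := by
    have h1 : Continuous (fun p : ℝ × ℝ => Real.exp (-(l * p.1))) := by fun_prop
    exact h1.continuousOn.mul (hP.mono hsub).abs
  obtain ⟨⟨τ, η'⟩, ⟨hτ, hη'⟩, hmax'⟩ := (isCompact_Icc.prod isCompact_Icc).exists_isMaxOn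
    ⟨(T, x), ⟨right_mem_Icc.2 hT, hx⟩⟩ hEc
  simp only at hτ hη'
  have hmax0 : ∀ s ∈ Icc (0 : ℝ) T, ∀ y ∈ Icc (0 : ℝ) 1, E (s, y) ≤ E (τ, η') :=
    fun s hs y hy => hmax' (a := (s, y)) ⟨hs, hy⟩
  by_contra hne
  have hEpos : 0 < E (T, x) := mul_pos (Real.exp_pos _) (abs_pos.2 hne)
  -- move the maximum point away from `η = 0`
  obtain ⟨η, hη, hηpos, hEη⟩ : ∃ η ∈ Icc (0 : ℝ) 1, 0 < η ∧ E (τ, η') = E (τ, η) := by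
    rcases eq_or_lt_of_le hη'.1 with h | h
    · refine ⟨1, right_mem_Icc.2 zero_le_one, zero_lt_one, ?_⟩
      simp only [E, ← h, hP0 τ hτ.1, hP1 τ hτ.1]
    · exact ⟨η', hη', h, rfl⟩
  have hmax : ∀ s ∈ Icc (0 : ℝ) T, ∀ y ∈ Icc (0 : ℝ) 1, E (s, y) ≤ E (τ, η) :=
    fun s hs y hy => hEη ▸ hmax0 s hs y hy
  have hEpos' : 0 < E (τ, η) := hEpos.trans_le (hmax T (right_mem_Icc.2 hT) x hx)
  have hPpos : 0 < |P τ η| := pos_of_mul_pos_right hEpos' (Real.exp_pos _).le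
  have hτpos : 0 < τ := by
    rcases eq_or_lt_of_le hτ.1 with h | h
    · rw [← h, hPi η hη] at hPpos; simp at hPpos
    · exact h
  have hWle : |W τ| ≤ |P τ η| := by
    have h1 := hmax τ hτ 0 (left_mem_Icc.2 zero_le_one)
    simp only [E, hP0 τ hτ.1, abs_neg] at h1
    exact le_of_mul_le_mul_left h1 (Real.exp_pos _)
  obtain ⟨ε, hε1, hεP⟩ : ∃ ε : ℝ, |ε| = 1 ∧ ε * P τ η = |P τ η| := by
    rcases le_total 0 (P τ η) with h | h
    · exact ⟨1, by simp, by rw [abs_of_nonneg h, one_mul]⟩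
    · exact ⟨-1, by simp, by rw [abs_of_nonpos h]; ring⟩
  have hle : ∀ z, ε * z ≤ |z| := fun z => by
    refine (le_abs_self _).trans ?_
    rw [abs_mul, hε1, one_mul]
  have hexp : HasDerivWithinAt (fun s : ℝ => Real.exp (-(l * (τ + s))))
      (Real.exp (-(l * (τ + 0))) * -(l * 1)) (Icc (-min τ η) 0) 0 :=
    ((((hasDerivWithinAt_id 0 _).const_add τ).const_mul l).fun_neg).exp
  have hψ := hexp.fun_mul ((hd τ hτ.1 η hη).const_mul ε)
  have hnn := deriv_nonneg_of_max_right _ _ _ (lt_min hτpos hηpos) hψ (fun s hs => ?_)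
  · simp only [add_zero] at hnn
    have h1 : 0 ≤ Real.exp (-(l * τ)) * (-l * |P τ η| + ε * R τ η) := by
      rw [← hεP]; linarith
    have h2 : 0 ≤ -l * |P τ η| + ε * R τ η :=
      nonneg_of_mul_nonneg_right h1 (Real.exp_pos _)
    have h3 := (hle (R τ η)).trans (hR τ hτ.1 η hη)
    have h4 : L * (|P τ η| + |W τ|) ≤ L * (|P τ η| + |P τ η|) :=
      mul_le_mul_of_nonneg_left (by linarith) hL
    have h5 : l * |P τ η| = L * (|P τ η| + |P τ η|) + |P τ η| := by simp only [l]; ring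
    linarith
  · simp only [add_zero, hεP]
    have h1 := min_le_left τ η
    have h2 := min_le_right τ η
    have h3 := hs.1
    have h4 := hs.2
    have h5 := hη.2
    have h6 := hτ.2
    refine (mul_le_mul_of_nonneg_left (hle _) (Real.exp_pos _).le).trans ?_
    exact hmax (τ + s) ⟨by linarith, by linarith⟩ (η + s) ⟨by linarith, by linarith⟩

/-- Uniqueness of global classical solutions. -/
theorem unique_sol (K : ℝ → ℝ) (ΦF : ℝ) (hK : KAssump K ΦF) (Qinit : ℝ → ℝ)
    (Q₁ Q₂ : ℝ → ℝ → ℝ) (N₁ N₂ : ℝ → ℝ) (h₁ : IsQSol K ΦF ⊤ Qinit Q₁ N₁)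
    (h₂ : IsQSol K ΦF ⊤ Qinit Q₂ N₂) :
    (∀ τ, 0 ≤ τ → ∀ η ∈ Icc (0 : ℝ) 1, Q₁ τ η = Q₂ τ η) ∧ ∀ τ, 0 ≤ τ → N₁ τ = N₂ τ := by
  obtain ⟨hd₁, hΦ₁⟩ := sol_facts K ΦF hK Qinit Q₁ N₁ h₁
  obtain ⟨hd₂, hΦ₂⟩ := sol_facts K ΦF hK Qinit Q₂ N₂ h₂
  have hr₁ := h₁.reg
  have hr₂ := h₂.reg
  have hN₁ := h₁.Ncont
  have hN₂ := h₂.Ncont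
  have hp₁ := h₁.Npos
  have hp₂ := h₂.Npos
  have hb₁ := h₁.bc
  have hb₂ := h₂.bc
  have he₁ := h₁.Ndef
  have he₂ := h₂.Ndef
  rw [Ico0_top] at hr₁ hr₂ hN₁ hN₂ hp₁ hp₂ hb₁ hb₂ he₁ he₂
  obtain ⟨L, hL⟩ := hK.bdd1
  have hL0 : 0 ≤ L := (abs_nonneg _).trans (hL 0)
  have hlip : ∀ x y, |K x - K y| ≤ L * |x - y| := fun x y =>
    Convex.norm_image_sub_le_of_norm_deriv_le (s := univ)
      (fun x _ => hK.smooth.differentiable (by norm_num) x) (fun x _ => hL x) convex_univ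
      trivial trivial
  let w : ℝ → ℝ := fun s => 1 / N₁ (max 0 s) - 1 / N₂ (max 0 s)
  have hmaxc : Continuous (fun s : ℝ => max 0 s) := by fun_prop
  have hmaxm : ∀ s : ℝ, max 0 s ∈ Ici (0 : ℝ) := fun s => mem_Ici.2 (le_max_left 0 s)
  have hw : Continuous w :=
    ((continuousOn_const.div hN₁ (fun t ht => (hp₁ t ht).ne')).comp_continuous hmaxc
      hmaxm).sub
    ((continuousOn_const.div hN₂ (fun t ht => (hp₂ t ht).ne')).comp_continuous hmaxc
      hmaxm)
  let W : ℝ → ℝ := fun τ => ∫ s in (0 : ℝ)..τ, w s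
  have hW : ∀ τ, HasDerivAt W (w τ) τ := fun τ => (hw.integral_hasStrictDerivAt 0 τ).hasDerivAt
  have hWc : Continuous W := continuous_iff_continuousAt.2 fun x => (hW x).continuousAt
  let P : ℝ → ℝ → ℝ := fun τ η => Q₁ τ η - Q₂ τ η - W τ
  have hP0 : ∀ τ, 0 ≤ τ → P τ 0 = -W τ := fun τ ht => by
    simp only [P, hb₁ τ ht, hb₂ τ ht]; ring
  have hzero := max_principle P W (fun τ η => K (Q₁ τ η) - K (Q₂ τ η)) L hL0
    ((hr₁.continuousOn.sub hr₂.continuousOn).sub (hWc.comp continuous_fst).continuousOn)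
    hP0 (fun τ ht => by simp only [P, hΦ₁ τ ht, hΦ₂ τ ht]; ring)
    (fun η hη => by simp [P, W, h₁.init η hη, h₂.init η hη])
    (fun τ ht η hη => by
      have hWd : HasDerivWithinAt (fun s : ℝ => W (τ + s)) (w τ) (Icc (-min τ η) 0) 0 := by
        have h := HasDerivAt.comp_const_add τ 0 (f := W) (f' := w τ) (by simpa using hW τ)
        exact h.hasDerivWithinAt
      refine (((hd₁ τ ht η hη).fun_sub (hd₂ τ ht η hη)).fun_sub hWd).congr_deriv ?_
      simp only [w, max_eq_right ht]
      ring)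
    (fun τ ht η hη => by
      refine (hlip _ _).trans (mul_le_mul_of_nonneg_left ?_ hL0)
      have : Q₁ τ η - Q₂ τ η = P τ η + W τ := by simp only [P]; ring
      rw [this]
      exact abs_add_le _ _)
  have hW0 : ∀ τ, 0 ≤ τ → W τ = 0 := fun τ ht => by
    have h1 := hP0 τ ht
    have h2 := hzero τ ht 0 (left_mem_Icc.2 zero_le_one)
    linarith
  have hQ : ∀ τ, 0 ≤ τ → ∀ η ∈ Icc (0 : ℝ) 1, Q₁ τ η = Q₂ τ η := fun τ ht η hη => by
    have h1 := hzero τ ht η hη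
    simp only [P, hW0 τ ht] at h1
    linarith
  refine ⟨hQ, fun τ ht => ?_⟩
  have hone : (1 : ℝ) ∈ Icc (0 : ℝ) 1 := right_mem_Icc.2 zero_le_one
  have hpd : pdEta Q₁ τ 1 = pdEta Q₂ τ 1 :=
    derivWithin_congr (fun y hy => hQ τ ht y hy) (hQ τ ht 1 hone)
  have h := he₁ τ ht
  rw [hpd, ← he₂ τ ht, one_div, one_div] at h
  exact inv_injective h

/-- Theorem 5.1: global existence and uniform firing-rate bounds for `K' ≤ 0` and mild
interaction (`H_init > 0`). -/
theorem stmt13 (ΦF : ℝ) (hΦF : 0 < ΦF) (K : ℝ → ℝ) (hK : KAssump K ΦF)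
    (hK' : ∀ φ ∈ Icc (0 : ℝ) ΦF, deriv K φ ≤ 0)
    (Qinit : ℝ → ℝ) (hA2 : A2 K ΦF Qinit)
    (hH : ∀ η ∈ Icc (0 : ℝ) 1, 0 < Hinit K Qinit η) :
    ∃ (Q : ℝ → ℝ → ℝ) (N : ℝ → ℝ),
      IsQSol K ΦF ⊤ Qinit Q N ∧
      (∀ (Q' : ℝ → ℝ → ℝ) (N' : ℝ → ℝ), IsQSol K ΦF ⊤ Qinit Q' N' →
        (∀ τ : ℝ, 0 ≤ τ → ∀ η ∈ Icc (0 : ℝ) 1, Q' τ η = Q τ η) ∧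
        (∀ τ : ℝ, 0 ≤ τ → N' τ = N τ)) ∧
      ∀ τ : ℝ, 0 ≤ τ →
        0 < 1 / sSup (Hinit K Qinit '' Icc (0 : ℝ) 1) ∧
        1 / sSup (Hinit K Qinit '' Icc (0 : ℝ) 1) ≤ N τ ∧
        N τ ≤ 1 / sInf (Hinit K Qinit '' Icc (0 : ℝ) 1) := by
  obtain ⟨Q, u, hsol, hb⟩ := exist_sol ΦF hΦF K hK hK' Qinit hA2 hH
  obtain ⟨-, -, hmpos, hmM⟩ := Hinit_facts K ΦF hK Qinit hA2 hH
  refine ⟨Q, fun t => 1 / u t, hsol, fun Q' N' h' =>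
    unique_sol K ΦF hK Qinit Q' Q N' _ h' hsol, fun τ hτ => ?_⟩
  obtain ⟨h1, h2⟩ := hb τ hτ
  have hu : 0 < u τ := hmpos.trans_le h1
  exact ⟨one_div_pos.2 (hu.trans_le h2), one_div_le_one_div_of_le hu h2,
    one_div_le_one_div_of_le hmpos h1⟩
end
end

section
/- Suppose k_min > 0 and ∫₀^{Φ_F} 1/K(φ) dφ > 1, so that a unique steady state (Q*, N*) of the Q-system exists. Let Q_init satisfy Assumption (A2) with Q_init ≠ Q*, and let τ* be the maximal existence time of the classical solution of the Q-system with initial datum Q_init. Then τ* ≤ (1/k_min) · ln( 2Φ_F / ‖Q_init' − (Q*)'‖_{L¹(0,1)} ) < ∞. -/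
open Real Set MeasureTheory Filter Topology
open scoped ENNReal

noncomputable section

/-- Data extracted from a classical solution on a closed time interval `[0,t]`. -/
structure Dat (K : ℝ → ℝ) (ΦF t : ℝ) (Q q : ℝ → ℝ → ℝ) (c : ℝ → ℝ) : Prop where
  qcont : ContinuousOn (Function.uncurry q) (Icc 0 t ×ˢ Icc (0 : ℝ) 1)
  Qcont : ContinuousOn (Function.uncurry Q) (Icc 0 t ×ˢ Icc (0 : ℝ) 1)
  dEta : ∀ τ ∈ Icc 0 t, ∀ η ∈ Icc (0 : ℝ) 1, HasDerivWithinAt (Q τ) (q τ η) (Icc 0 1) η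
  dChar : ∀ τ ξ h : ℝ, 0 ≤ τ → 0 ≤ ξ → τ + h ≤ t → ξ + h ≤ 1 → ∀ s ∈ Icc 0 h,
    HasDerivWithinAt (fun s => Q (τ + s) (ξ + s)) (c (τ + s) + K (Q (τ + s) (ξ + s))) (Icc 0 h) s
  mono : ∀ τ ∈ Icc 0 t, MonotoneOn (Q τ) (Icc 0 1)
  Q0 : ∀ τ ∈ Icc 0 t, Q τ 0 = 0
  Q1 : ∀ τ ∈ Icc 0 t, Q τ 1 = ΦF
  bq : ∀ τ ∈ Icc 0 t, q τ 1 - q τ 0 = K ΦF - K 0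
  qnonneg : ∀ τ ∈ Icc 0 t, ∀ η ∈ Icc (0 : ℝ) 1, 0 ≤ q τ η

lemma Ico0_eq (T : ℝ≥0∞) : Ico0 T = Ici 0 ∩ {τ : ℝ | ENNReal.ofReal τ < T} := rfl

lemma isOpen_ofReal_lt (T : ℝ≥0∞) : IsOpen {τ : ℝ | ENNReal.ofReal τ < T} :=
  isOpen_lt ENNReal.continuous_ofReal continuous_const

lemma Icc_sub_Ico0 {T : ℝ≥0∞} {t : ℝ} (ht : t ∈ Ico0 T) : Icc 0 t ⊆ Ico0 T := by
  intro x hx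
  exact ⟨hx.1, lt_of_le_of_lt (ENNReal.ofReal_le_ofReal hx.2) ht.2⟩

lemma dat_of_sol {K : ℝ → ℝ} {ΦF : ℝ} (hK : KAssump K ΦF) {T : ℝ≥0∞} {Qi : ℝ → ℝ}
    {Q : ℝ → ℝ → ℝ} {N : ℝ → ℝ} (hQ : IsQSol K ΦF T Qi Q N) {t : ℝ} (ht : t ∈ Ico0 T) :
    Dat K ΦF t Q (pdEta Q) (fun τ => 1 / N τ) := by
  have hsub := Icc_sub_Ico0 ht
  set S : Set (ℝ × ℝ) := Ico0 T ×ˢ Icc (0 : ℝ) 1 with hS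
  have hU1 : UniqueDiffOn ℝ (Ico0 T) := (uniqueDiffOn_Ici 0).inter (isOpen_ofReal_lt T)
  have hU2 : UniqueDiffOn ℝ (Icc (0 : ℝ) 1) := uniqueDiffOn_Icc one_pos
  have hU : UniqueDiffOn ℝ S := hU1.prod hU2
  set F := Function.uncurry Q with hF
  set L := fderivWithin ℝ F S with hL
  have hLc : ContinuousOn L S := hQ.reg.continuousOn_fderivWithin hU le_rfl
  have hFd : ∀ p ∈ S, HasFDerivWithinAt F (L p) S p := fun p hp =>
    ((hQ.reg.differentiableOn one_ne_zero) p hp).hasFDerivWithinAt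
  have hKc : Continuous K := hK.smooth.continuous
  -- spatial derivative
  have hEta : ∀ τ ∈ Ico0 T, ∀ η ∈ Icc (0 : ℝ) 1,
      HasDerivWithinAt (Q τ) (L (τ, η) (0, 1)) (Icc 0 1) η := by
    intro τ hτ η hη
    have h1 : HasDerivWithinAt (fun x : ℝ => (τ, x)) ((0 : ℝ), (1 : ℝ)) (Icc 0 1) η :=
      (hasDerivWithinAt_const _ _ _).prodMk (hasDerivWithinAt_id _ _)
    exact (hFd (τ, η) ⟨hτ, hη⟩).comp_hasDerivWithinAt (f := fun x : ℝ => (τ, x)) η h1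
      (fun x hx => ⟨hτ, hx⟩)
  have hEta' : ∀ τ ∈ Ico0 T, ∀ η ∈ Icc (0 : ℝ) 1, pdEta Q τ η = L (τ, η) (0, 1) := by
    intro τ hτ η hη
    exact (hEta τ hτ η hη).derivWithin (hU2 η hη)
  have hTau : ∀ τ ∈ Ico0 T, ∀ η ∈ Icc (0 : ℝ) 1,
      HasDerivWithinAt (fun s => Q s η) (L (τ, η) (1, 0)) (Ico0 T) τ := by
    intro τ hτ η hη
    have h1 : HasDerivWithinAt (fun x : ℝ => (x, η)) ((1 : ℝ), (0 : ℝ)) (Ico0 T) τ :=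
      (hasDerivWithinAt_id _ _).prodMk (hasDerivWithinAt_const _ _ _)
    exact (hFd (τ, η) ⟨hτ, hη⟩).comp_hasDerivWithinAt (f := fun x : ℝ => (x, η)) τ h1
      (fun x hx => ⟨hx, hη⟩)
  have hTau' : ∀ τ ∈ Ico0 T, ∀ η ∈ Icc (0 : ℝ) 1, pdTau Q τ η = L (τ, η) (1, 0) := by
    intro τ hτ η hη
    rw [← (hTau τ hτ η hη).derivWithin (hU1 τ hτ), pdTau, Ico0_eq, derivWithin_inter]
    exact (isOpen_ofReal_lt T).mem_nhds hτ.2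
  -- the equation on the closed interval
  have hpde : ∀ τ ∈ Ico0 T, ∀ η ∈ Icc (0 : ℝ) 1,
      L (τ, η) (1, 0) + L (τ, η) (0, 1) = 1 / N τ + K (Q τ η) := by
    intro τ hτ
    have hmk : ContinuousOn (fun η : ℝ => (τ, η)) (Icc 0 1) := by fun_prop
    have hmaps : MapsTo (fun η : ℝ => (τ, η)) (Icc 0 1) S := fun x hx => ⟨hτ, hx⟩
    have hLτ : ContinuousOn (fun η : ℝ => L (τ, η)) (Icc 0 1) := hLc.comp hmk hmaps
    have hQτ : ContinuousOn (fun η : ℝ => Q τ η) (Icc 0 1) := hQ.reg.continuousOn.comp hmk hmaps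
    have : EqOn (fun η => L (τ, η) (1, 0) + L (τ, η) (0, 1)) (fun η => 1 / N τ + K (Q τ η))
        (Icc 0 1) := by
      refine Set.EqOn.of_subset_closure (s := Ioo 0 1) ?_ ?_ ?_ Ioo_subset_Icc_self ?_
      · intro η hη
        have h := hQ.pde τ hτ η hη
        rw [hTau' τ hτ η (Ioo_subset_Icc_self hη), hEta' τ hτ η (Ioo_subset_Icc_self hη)] at h
        exact h
      · exact (hLτ.clm_apply continuousOn_const).add (hLτ.clm_apply continuousOn_const)
      · exact continuousOn_const.add (hKc.comp_continuousOn hQτ)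
      · rw [closure_Ioo (by norm_num)]
    exact this
  have h01 : (0 : ℝ) ∈ Icc (0 : ℝ) 1 := ⟨le_rfl, zero_le_one⟩
  have h11 : (1 : ℝ) ∈ Icc (0 : ℝ) 1 := ⟨zero_le_one, le_rfl⟩
  have hsubS : Icc 0 t ×ˢ Icc (0 : ℝ) 1 ⊆ S := prod_mono hsub le_rfl
  -- Q τ 1 = ΦF
  have hQ1 : ∀ τ ∈ Icc 0 t, Q τ 1 = ΦF := by
    obtain ⟨C, hC⟩ := hK.bdd1
    have hd : ∀ x ∈ Ico 0 t, HasDerivWithinAt (fun s => Q s 1 - ΦF) (K (Q x 1) - K ΦF) (Ici x) x := by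
      intro x hx
      have hx' := hsub (Ico_subset_Icc_self hx)
      have h1 := hTau x hx' 1 h11
      have h2 := hpde x hx' 1 h11
      have h3 := hQ.Ndef x hx'
      rw [hEta' x hx' 1 h11] at h3
      have h4 : L (x, 1) (1, 0) = K (Q x 1) - K ΦF := by linarith
      rw [h4] at h1
      refine (h1.sub_const ΦF).mono_of_mem_nhdsWithin ?_
      rw [Ico0_eq]
      refine inter_mem (mem_of_superset self_mem_nhdsWithin (Ici_subset_Ici.2 hx.1)) ?_
      exact mem_nhdsWithin_of_mem_nhds ((isOpen_ofReal_lt T).mem_nhds hx'.2)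
    have hc : ContinuousOn (fun s => Q s 1 - ΦF) (Icc 0 t) := by
      intro x hx
      exact ((hTau x (hsub hx) 1 h11).continuousWithinAt.mono hsub).sub continuousWithinAt_const
    have := eq_zero_of_abs_deriv_le_mul_abs_self_of_eq_zero_right (K := C) hc hd
      (by simp [hQ.init 1 h11, hQ.init1]) (by
        intro x hx
        have := Convex.norm_image_sub_le_of_norm_deriv_le (𝕜 := ℝ) (f := K) (s := univ) (C := C)
          (x := ΦF) (y := Q x 1)
          (fun y _ => (hK.smooth.differentiable (by norm_num)) y) (fun y _ => hC y) convex_univ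
          (mem_univ _) (mem_univ _)
        exact this)
    intro τ hτ
    have := this τ hτ
    linarith
  refine ⟨?_, hQ.reg.continuousOn.mono hsubS, ?_, ?_, fun τ hτ => hQ.mono τ (hsub hτ),
    fun τ hτ => hQ.bc τ (hsub hτ), hQ1, ?_, ?_⟩
  · refine ContinuousOn.congr (f := fun p => L p (0, 1))
      ((hLc.clm_apply continuousOn_const).mono hsubS) ?_
    rintro ⟨τ, η⟩ ⟨h1, h2⟩
    exact hEta' τ (hsub h1) η h2
  · intro τ hτ η hη
    rw [hEta' τ (hsub hτ) η hη]
    exact hEta τ (hsub hτ) η hη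
  · intro τ ξ h hτ hξ hτh hξh s hs
    have hmap : MapsTo (fun s => (τ + s, ξ + s)) (Icc 0 h) S := by
      intro s hs
      refine ⟨hsub ⟨by linarith [hs.1], by linarith [hs.2]⟩, by linarith [hs.1], by linarith [hs.2]⟩
    have h1 : HasDerivWithinAt (fun s : ℝ => (τ + s, ξ + s)) ((1 : ℝ), (1 : ℝ)) (Icc 0 h) s :=
      ((hasDerivWithinAt_id _ _).const_add _).prodMk ((hasDerivWithinAt_id _ _).const_add _)
    have h2 := (hFd _ (hmap hs)).comp_hasDerivWithinAt (f := fun s : ℝ => (τ + s, ξ + s)) s h1 hmap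
    have h3 := hpde _ (hmap hs).1 _ (hmap hs).2
    rw [← map_add] at h3
    simp only [Prod.mk_add_mk, add_zero, zero_add] at h3
    rw [h3] at h2
    exact h2
  · intro τ hτ
    have h2 := hpde τ (hsub hτ) 0 h01
    have h3 := hQ.Ndef τ (hsub hτ)
    have h4 : L (τ, 0) (1, 0) = 0 := by
      have hz : HasDerivWithinAt (fun s => Q s 0) 0 (Ico0 T) τ :=
        (hasDerivWithinAt_const τ (Ico0 T) (0 : ℝ)).congr (fun x hx => hQ.bc x hx)
          (hQ.bc τ (hsub hτ))
      exact (hU1 τ (hsub hτ)).eq_deriv _ (hTau τ (hsub hτ) 0 h01) hz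
    rw [h4, hQ.bc τ (hsub hτ), ← hEta' τ (hsub hτ) 0 h01] at h2
    linarith
  · intro τ hτ η hη
    exact (hQ.mono τ (hsub hτ)).derivWithin_nonneg

lemma sol_of_steady {K : ℝ → ℝ} {ΦF : ℝ} (hΦF : 0 < ΦF) (hK : KAssump K ΦF)
    {Qs : ℝ → ℝ} {Ns : ℝ} (hss : IsSteadyState K ΦF Qs Ns) :
    IsQSol K ΦF ⊤ Qs (fun _ => Qs) (fun _ => Ns) := by
  obtain ⟨hreg, hN, hode, h0, h1⟩ := hss
  have hN' : 0 < 1 / Ns := by positivity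
  have hK0 : 0 < K 0 := hK.pos 0 ⟨le_rfl, hΦF.le⟩
  have hK1 : 0 < K ΦF := hK.pos ΦF ⟨hΦF.le, le_rfl⟩
  have hd : ∀ x ∈ Icc (0 : ℝ) 1, HasDerivWithinAt Qs (K (Qs x) + 1 / Ns) (Icc 0 1) x := by
    intro x hx
    rw [← hode x hx]
    exact ((hreg.differentiableOn one_ne_zero) x hx).hasDerivWithinAt
  have hge : ∀ ⦃x⦄, x ∈ Icc (0 : ℝ) 1 → -Qs x ≤ 0 := by
    refine image_le_of_deriv_right_lt_deriv_boundary' (f := fun x => -Qs x)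
      (f' := fun x => -(K (Qs x) + 1 / Ns)) (B := fun _ => 0) (B' := fun _ => 0)
      hreg.continuousOn.neg ?_ (by simp [h0]) continuousOn_const
      (fun x _ => hasDerivWithinAt_const _ _ _) ?_
    · intro x hx
      exact ((hd x (Ico_subset_Icc_self hx)).neg).mono_of_mem_nhdsWithin
        (Icc_mem_nhdsGE_of_mem hx)
    · intro x hx hx0
      have : Qs x = 0 := by linarith
      rw [this]; linarith
  have hle : ∀ ⦃x⦄, x ∈ Icc (0 : ℝ) 1 → Qs (1 - x) ≤ ΦF := by
    have hmaps : MapsTo (fun x : ℝ => 1 - x) (Icc 0 1) (Icc 0 1) := fun x hx =>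
      ⟨by linarith [hx.2], by linarith [hx.1]⟩
    refine image_le_of_deriv_right_lt_deriv_boundary' (f := fun x => Qs (1 - x))
      (f' := fun x => -(K (Qs (1 - x)) + 1 / Ns)) (B := fun _ => ΦF) (B' := fun _ => 0)
      (hreg.continuousOn.comp (by fun_prop) hmaps) ?_ (by simp [h1]) continuousOn_const
      (fun x _ => hasDerivWithinAt_const _ _ _) ?_
    · intro x hx
      have hx' := Ico_subset_Icc_self hx
      have e : HasDerivWithinAt (fun x : ℝ => 1 - x) (-1) (Icc 0 1) x :=
        (hasDerivWithinAt_id x _).const_sub 1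
      have := (hd (1 - x) (hmaps hx')).comp x e hmaps
      rw [mul_neg_one] at this
      exact this.mono_of_mem_nhdsWithin (Icc_mem_nhdsGE_of_mem hx)
    · intro x hx hx0
      rw [hx0]; linarith
  have hpos : ∀ x ∈ Icc (0 : ℝ) 1, 0 < K (Qs x) := by
    intro x hx
    refine hK.pos _ ⟨by linarith [hge hx], ?_⟩
    have := hle (x := 1 - x) ⟨by linarith [hx.2], by linarith [hx.1]⟩
    simpa using this
  have hmono : MonotoneOn Qs (Icc 0 1) := by
    refine monotoneOn_of_hasDerivWithinAt_nonneg (convex_Icc 0 1) hreg.continuousOn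
      (f' := fun x => K (Qs x) + 1 / Ns) ?_ ?_
    · intro x hx
      exact (hd x (interior_subset hx)).mono interior_subset
    · intro x hx
      linarith [hpos x (interior_subset hx)]
  have h11 : (1 : ℝ) ∈ Icc (0 : ℝ) 1 := ⟨zero_le_one, le_rfl⟩
  have hd1 : derivWithin Qs (Icc 0 1) 1 = K ΦF + 1 / Ns := by rw [hode 1 h11, h1]
  refine ⟨hreg, hmono, h0, h1, by rw [hd1]; linarith, ?_, fun _ _ => hmono, continuousOn_const,
    fun _ _ => hN, ?_, fun _ _ => h0, ?_, fun _ _ => rfl, ?_⟩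
  · exact hreg.comp contDiff_snd.contDiffOn (fun p hp => hp.2)
  · intro τ _ η hη
    have : pdTau (fun _ => Qs) τ η = 0 := by simp [pdTau]
    rw [this, pdEta, hode η (Ioo_subset_Icc_self hη)]
    ring
  · intro τ _
    rw [pdEta, hd1]; ring
  · intro τ _
    rw [pdEta, hd1]; linarith

lemma Dat.Ksmooth_step {K : ℝ → ℝ} {ΦF t : ℝ} {Q q : ℝ → ℝ → ℝ} {c : ℝ → ℝ}
    (hK : ContDiff ℝ 2 K) (D : Dat K ΦF t Q q c) {ε : ℝ} (hε : 0 < ε) :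
    ∃ δ > 0, ∀ τ ∈ Icc 0 t, ∀ h, 0 < h → h < δ → τ + h ≤ t → ∀ ξ, 0 ≤ ξ → ξ < 1 - h →
      |q (τ + h) (ξ + h) - q τ ξ - h * (deriv K (Q τ ξ) * q τ ξ)| ≤ h * ε := by
  have hKd : ∀ x, HasDerivAt K (deriv K x) x := fun x =>
    ((hK.differentiable (by norm_num)) x).hasDerivAt
  have hK'c : Continuous (deriv K) := hK.continuous_deriv (by norm_num)
  have hGc : ContinuousOn (fun p : ℝ × ℝ => deriv K (Q p.1 p.2) * q p.1 p.2)
      (Icc 0 t ×ˢ Icc (0 : ℝ) 1) := (hK'c.comp_continuousOn D.Qcont).mul D.qcont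
  have huc := (isCompact_Icc.prod isCompact_Icc).uniformContinuousOn_of_continuous hGc
  obtain ⟨δ, hδ, H⟩ := Metric.uniformContinuousOn_iff.1 huc ε hε
  refine ⟨δ / 2, by positivity, ?_⟩
  intro τ hτ h hh hhδ hτh ξ hξ hξh
  set m := deriv K (Q τ ξ) * q τ ξ with hm
  -- spatial estimate
  have key : ∀ s ∈ Icc 0 h, ∀ x, ξ ≤ x → x < ξ + δ / 2 → x ≤ 1 - h →
      |K (Q (τ + s) (x + s)) - K (Q (τ + s) (ξ + s)) - m * (x - ξ)| ≤ ε * (x - ξ) := by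
    intro s hs x hx1 hx2 hx3
    have hτs : τ + s ∈ Icc 0 t := ⟨by linarith [hτ.1, hs.1], by linarith [hs.2]⟩
    have hsub : Icc (ξ + s) (x + s) ⊆ Icc 0 1 := fun y hy =>
      ⟨by linarith [hs.1, hy.1], by linarith [hs.2, hy.2]⟩
    have := Convex.norm_image_sub_le_of_norm_hasDerivWithin_le (𝕜 := ℝ)
      (f := fun y => K (Q (τ + s) y) - m * y)
      (f' := fun y => deriv K (Q (τ + s) y) * q (τ + s) y - m * 1)
      (s := Icc (ξ + s) (x + s)) (x := ξ + s) (y := x + s) (C := ε) ?_ ?_ (convex_Icc _ _)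
      ⟨le_rfl, by linarith⟩ ⟨by linarith, le_rfl⟩
    · rw [Real.norm_eq_abs, Real.norm_eq_abs, abs_of_nonneg (a := x + s - (ξ + s)) (by linarith)] at this
      have e1 : K (Q (τ + s) (x + s)) - m * (x + s) - (K (Q (τ + s) (ξ + s)) - m * (ξ + s))
        = K (Q (τ + s) (x + s)) - K (Q (τ + s) (ξ + s)) - m * (x - ξ) := by ring
      rw [e1] at this
      convert this using 2
      ring
    · intro y hy
      refine HasDerivWithinAt.sub ?_ ((hasDerivWithinAt_id _ _).const_mul m)
      exact (hKd _).comp_hasDerivWithinAt y ((D.dEta _ hτs y (hsub hy)).mono hsub)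
    · intro y hy
      have := H (τ + s, y) ⟨hτs, hsub hy⟩ (τ, ξ) ⟨hτ, hξ, by linarith⟩ (by
        rw [Prod.dist_eq, max_lt_iff, Real.dist_eq, Real.dist_eq]
        constructor
        · simp only [add_sub_cancel_left]
          rw [abs_of_nonneg hs.1]; linarith [hs.2]
        · rw [abs_of_nonneg (by linarith [hy.1, hs.1])]
          linarith [hy.2, hs.2])
      rw [Real.dist_eq] at this
      rw [mul_one, Real.norm_eq_abs]
      exact this.le
  -- time estimate
  have key2 : ∀ x, ξ ≤ x → x < ξ + δ / 2 → x ≤ 1 - h →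
      |(Q (τ + h) (x + h) - Q τ x) - (Q (τ + h) (ξ + h) - Q τ ξ) - h * m * (x - ξ)|
        ≤ h * ε * (x - ξ) := by
    intro x hx1 hx2 hx3
    have := Convex.norm_image_sub_le_of_norm_hasDerivWithin_le (𝕜 := ℝ)
      (f := fun s => Q (τ + s) (x + s) - Q (τ + s) (ξ + s) - (m * (x - ξ)) * s)
      (f' := fun s => (1 / 1 * (c (τ + s)) + K (Q (τ + s) (x + s)))
        - (1 / 1 * (c (τ + s)) + K (Q (τ + s) (ξ + s))) - (m * (x - ξ)) * 1)
      (s := Icc 0 h) (x := 0) (y := h) (C := ε * (x - ξ)) ?_ ?_ (convex_Icc _ _)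
      ⟨le_rfl, hh.le⟩ ⟨hh.le, le_rfl⟩
    · rw [Real.norm_eq_abs, Real.norm_eq_abs, sub_zero, abs_of_pos hh] at this
      simp only [add_zero, mul_zero, sub_zero] at this
      have e1 : (Q (τ + h) (x + h) - Q τ x) - (Q (τ + h) (ξ + h) - Q τ ξ) - h * m * (x - ξ)
        = Q (τ + h) (x + h) - Q (τ + h) (ξ + h) - (m * (x - ξ)) * h - (Q τ x - Q τ ξ) := by ring
      rw [e1]
      linarith
    · intro s hs
      have d1 := D.dChar τ x h hτ.1 (by linarith) hτh (by linarith) s hs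
      have d2 := D.dChar τ ξ h hτ.1 hξ hτh (by linarith) s hs
      simp only [div_one, one_mul]
      exact (d1.sub d2).sub ((hasDerivWithinAt_id _ _).const_mul _)
    · intro s hs
      have := key s hs x hx1 hx2 hx3
      rw [Real.norm_eq_abs]
      convert this using 2
      ring
  -- limit
  have hτh' : τ + h ∈ Icc 0 t := ⟨by linarith [hτ.1], hτh⟩
  have hder : HasDerivWithinAt (fun x => Q (τ + h) (x + h) - Q τ x)
      (q (τ + h) (ξ + h) - q τ ξ) (Ioi ξ) ξ := by
    have hI : Icc ξ (1 - h) ∈ 𝓝[>] ξ := Icc_mem_nhdsGT_of_mem ⟨le_rfl, hξh⟩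
    refine HasDerivWithinAt.mono_of_mem_nhdsWithin (t := Icc ξ (1 - h)) ?_ hI
    have hmaps : MapsTo (fun x => x + h) (Icc ξ (1 - h)) (Icc 0 1) := fun y hy =>
      ⟨by linarith [hy.1], by linarith [hy.2]⟩
    have d1 := (D.dEta _ hτh' (ξ + h) ⟨by linarith, by linarith⟩).comp ξ
      ((hasDerivWithinAt_id ξ (Icc ξ (1 - h))).add_const h) hmaps
    rw [mul_one] at d1
    exact d1.sub ((D.dEta τ hτ ξ ⟨hξ, by linarith⟩).mono
      (fun y hy => ⟨by linarith [hy.1], by linarith [hy.2]⟩))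
  rw [hasDerivWithinAt_iff_tendsto_slope' (by simp)] at hder
  have hlim := (hder.sub_const (h * m)).abs
  refine le_of_tendsto hlim ?_
  have hI : Ioo ξ (min (1 - h) (ξ + δ / 2)) ∈ 𝓝[>] ξ :=
    Ioo_mem_nhdsGT (lt_min hξh (by linarith))
  filter_upwards [hI] with x hx
  have hx2 := lt_min_iff.1 hx.2
  have := key2 x hx.1.le hx2.2 hx2.1.le
  have hpos : 0 < x - ξ := by linarith [hx.1]
  rw [slope_def_field]
  have e : (Q (τ + h) (x + h) - Q τ x - (Q (τ + h) (ξ + h) - Q τ ξ)) / (x - ξ) - h * m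
    = ((Q (τ + h) (x + h) - Q τ x) - (Q (τ + h) (ξ + h) - Q τ ξ) - h * m * (x - ξ)) / (x - ξ) := by
    field_simp
  rw [e, abs_div, abs_of_pos hpos, div_le_iff₀ hpos]
  exact this

lemma alg_ineq {k aM am bM bm P p h : ℝ} (hh : 0 ≤ h) (hP : 0 ≤ P) (hp : 0 ≤ p)
    (ha0 : 0 ≤ aM) (ha : aM ≤ am) (hb0 : 0 ≤ bm) (hb : bm ≤ bM) :
    |P - p| + h * k * |P - p| + h * ((aM - bM) * P - (am - bm) * p) ≤
      |P - p + h * ((k + aM + bM) * P - (k + am + bm) * p)| := by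
  rcases le_total p P with hpP | hpP
  · rw [abs_of_nonneg (a := P - p) (by linarith)]
    refine le_trans ?_ (le_abs_self _)
    have h1 : bm * p ≤ bM * P := mul_le_mul hb hpP hp (hb0.trans hb)
    have h2 : 0 ≤ h * (bM * P - bm * p) := mul_nonneg hh (by linarith)
    nlinarith
  · rw [abs_of_nonpos (a := P - p) (by linarith)]
    refine le_trans ?_ (neg_le_abs _)
    have h1 : aM * P ≤ am * p := mul_le_mul ha hpP hP (ha0.trans ha)
    have h2 : 0 ≤ h * (am * p - aM * P) := mul_nonneg hh (by linarith)
    nlinarith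

/-- The auxiliary functional `Θ(max) - Θ(min)`. -/
def thetaFn (Θ A B : ℝ → ℝ) (x : ℝ) : ℝ := Θ (max (A x) (B x)) - Θ (min (A x) (B x))

lemma thetaFn_comm (Θ A B : ℝ → ℝ) : thetaFn Θ A B = thetaFn Θ B A := by
  funext x
  simp [thetaFn, max_comm, min_comm]

lemma theta_of_event {Θ Θ' A B : ℝ → ℝ} {x A' B' : ℝ} (hΘ : ∀ y, HasDerivAt Θ (Θ' y) y)
    (hA : HasDerivWithinAt A A' (Ioi x) x) (hB : HasDerivWithinAt B B' (Ioi x) x)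
    (h0 : B x ≤ A x) (hev : ∀ᶠ y in 𝓝[>] x, B y ≤ A y) :
    HasDerivWithinAt (thetaFn Θ A B) (Θ' (A x) * A' - Θ' (B x) * B') (Ioi x) x := by
  have h1 : HasDerivWithinAt (fun y => Θ (A y) - Θ (B y)) (Θ' (A x) * A' - Θ' (B x) * B')
      (Ioi x) x :=
    ((hΘ (A x)).comp_hasDerivWithinAt x hA).sub ((hΘ (B x)).comp_hasDerivWithinAt x hB)
  refine h1.congr_of_eventuallyEq ?_ ?_
  · filter_upwards [hev] with y hy
    simp [thetaFn, hy]
  · simp [thetaFn, h0]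

lemma event_of_deriv {A B : ℝ → ℝ} {x A' B' : ℝ}
    (hA : HasDerivWithinAt A A' (Ioi x) x) (hB : HasDerivWithinAt B B' (Ioi x) x)
    (h0 : B x = A x) (h : B' < A') : ∀ᶠ y in 𝓝[>] x, B y ≤ A y := by
  have h1 := hA.sub hB
  rw [hasDerivWithinAt_iff_tendsto_slope' (by simp)] at h1
  have h2 := h1.eventually (lt_mem_nhds (show (0 : ℝ) < A' - B' by linarith))
  filter_upwards [h2, self_mem_nhdsWithin] with y hy hyx
  rw [slope_def_field] at hy
  have hpos : 0 < y - x := sub_pos.2 hyx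
  have := (div_pos_iff_of_pos_right hpos).1 hy
  simp only [Pi.sub_apply] at this
  linarith

lemma theta_deriv {Θ Θ' A B : ℝ → ℝ} {x A' B' : ℝ} (hΘ : ∀ y, HasDerivAt Θ (Θ' y) y)
    (hA : HasDerivWithinAt A A' (Ioi x) x) (hB : HasDerivWithinAt B B' (Ioi x) x) :
    (B x ≤ A x ∧ HasDerivWithinAt (thetaFn Θ A B) (Θ' (A x) * A' - Θ' (B x) * B') (Ioi x) x) ∨
    (A x ≤ B x ∧ HasDerivWithinAt (thetaFn Θ A B) (Θ' (B x) * B' - Θ' (A x) * A') (Ioi x) x) := by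
  have hcA := hA.continuousWithinAt
  have hcB := hB.continuousWithinAt
  rcases lt_trichotomy (A x) (B x) with h | h | h
  · right
    refine ⟨h.le, ?_⟩
    rw [thetaFn_comm]
    refine theta_of_event hΘ hB hA h.le ?_
    filter_upwards [hcA.eventually_lt hcB h] with y hy using hy.le
  · rcases lt_trichotomy A' B' with h' | h' | h'
    · right
      refine ⟨h.le, ?_⟩
      rw [thetaFn_comm]
      exact theta_of_event hΘ hB hA h.le (event_of_deriv hB hA h h')
    · left
      refine ⟨h.ge, ?_⟩
      have h1 : HasDerivWithinAt (fun y => Θ (A y) - Θ (B y)) (Θ' (A x) * A' - Θ' (B x) * B')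
          (Ioi x) x :=
        ((hΘ (A x)).comp_hasDerivWithinAt x hA).sub ((hΘ (B x)).comp_hasDerivWithinAt x hB)
      have e : Θ' (A x) * A' - Θ' (B x) * B' = 0 := by rw [h, h', sub_self]
      rw [e] at h1 ⊢
      rw [hasDerivWithinAt_iff_isLittleO] at h1 ⊢
      refine Asymptotics.IsLittleO.of_norm_left ?_
      refine h1.norm_left.congr_left ?_
      intro y
      have e2 : thetaFn Θ A B x = 0 := by simp [thetaFn, h]
      rw [e2]
      simp only [h, smul_zero, sub_zero, sub_self, Real.norm_eq_abs]
      rcases le_total (A y) (B y) with hy | hy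
      · simp [thetaFn, hy, abs_sub_comm]
      · simp [thetaFn, hy]
    · left
      exact ⟨h.ge, theta_of_event hΘ hA hB h.ge (event_of_deriv hA hB h.symm h')⟩
  · left
    refine ⟨h.le, theta_of_event hΘ hA hB h.le ?_⟩
    filter_upwards [hcB.eventually_lt hcA h] with y hy using hy.le

lemma int_nonpos {f : ℝ → ℝ} {u v : ℝ} (huv : u ≤ v) (hf : ∀ x ∈ Icc u v, f x ≤ 0) :
    ∫ x in u..v, f x ≤ 0 := by
  have := intervalIntegral.integral_nonneg (f := fun x => -f x) (μ := volume) huv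
    (fun x hx => neg_nonneg.2 (hf x hx))
  rw [intervalIntegral.integral_neg] at this
  linarith

/-- Decomposition of the derivative of the response function. -/
lemma K_decomp {K : ℝ → ℝ} {ΦF : ℝ} (hK : ContDiff ℝ 2 K) :
    ∃ a b Θ : ℝ → ℝ, (∀ y, deriv K y = kmin K ΦF + a y + b y) ∧
      (∀ y, HasDerivAt Θ (a y - b y) y) ∧ (∀ x y, x ≤ y → a y ≤ a x) ∧
      (∀ x y, x ≤ y → b x ≤ b y) ∧ (∀ y ≤ ΦF, 0 ≤ a y) ∧ (∀ y, 0 ≤ y → 0 ≤ b y) := by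
  have hK' : ContDiff ℝ 1 (deriv K) := by
    have : ContDiff ℝ (1 + 1) K := by simpa [one_add_one_eq_two] using hK
    exact (contDiff_succ_iff_deriv.1 this).2.2
  have hK''c : Continuous (deriv (deriv K)) := hK'.continuous_deriv le_rfl
  set f := deriv (deriv K) with hf
  have hmin : Continuous fun x => min (f x) 0 := by fun_prop
  have hmax : Continuous fun x => max (f x) 0 := by fun_prop
  have imin : ∀ u v : ℝ, IntervalIntegrable (fun x => min (f x) 0) volume u v :=
    fun u v => hmin.intervalIntegrable u v
  have imax : ∀ u v : ℝ, IntervalIntegrable (fun x => max (f x) 0) volume u v :=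
    fun u v => hmax.intervalIntegrable u v
  have hac : Continuous fun y => -∫ x in y..ΦF, min (f x) 0 := by
    have : (fun y => -∫ x in y..ΦF, min (f x) 0) = fun y => ∫ x in ΦF..y, min (f x) 0 := by
      funext y; rw [intervalIntegral.integral_symm, neg_neg]
    rw [this]
    exact intervalIntegral.continuous_primitive imin ΦF
  have hbc : Continuous fun y => ∫ x in (0 : ℝ)..y, max (f x) 0 :=
    intervalIntegral.continuous_primitive imax 0
  refine ⟨fun y => -∫ x in y..ΦF, min (f x) 0, fun y => ∫ x in (0 : ℝ)..y, max (f x) 0,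
    fun y => ∫ z in (0 : ℝ)..y, ((-∫ x in z..ΦF, min (f x) 0) - ∫ x in (0 : ℝ)..z, max (f x) 0),
    ?_, ?_, ?_, ?_, ?_, ?_⟩
  · intro y
    have h1 : ∫ x in (0 : ℝ)..y, f x = deriv K y - deriv K 0 :=
      intervalIntegral.integral_deriv_eq_sub
        (fun x _ => (hK'.differentiable one_ne_zero) x) (hK''c.intervalIntegrable _ _)
    have h2 : ∫ x in (0 : ℝ)..y, f x = (∫ x in (0 : ℝ)..y, min (f x) 0)
        + ∫ x in (0 : ℝ)..y, max (f x) 0 := by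
      rw [← intervalIntegral.integral_add (imin _ _) (imax _ _)]
      refine intervalIntegral.integral_congr (fun x _ => ?_)
      simp [min_add_max]
    have h3 := intervalIntegral.integral_add_adjacent_intervals (imin 0 y) (imin y ΦF)
    simp only [kmin, ← hf]
    linarith
  · intro y
    have hc : Continuous fun z => (-∫ x in z..ΦF, min (f x) 0) - ∫ x in (0 : ℝ)..z, max (f x) 0 :=
      hac.sub hbc
    exact intervalIntegral.integral_hasDerivAt_right (hc.intervalIntegrable _ _)
      (hc.stronglyMeasurableAtFilter _ _) hc.continuousAt
  · intro x y hxy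
    have h3 := intervalIntegral.integral_add_adjacent_intervals (imin x y) (imin y ΦF)
    have h4 : ∫ z in x..y, min (f z) 0 ≤ 0 :=
      int_nonpos hxy (fun u _ => min_le_right _ _)
    simp only
    linarith
  · intro x y hxy
    have h3 := intervalIntegral.integral_add_adjacent_intervals (imax 0 x) (imax x y)
    have h4 : 0 ≤ ∫ z in x..y, max (f z) 0 :=
      intervalIntegral.integral_nonneg hxy (fun u _ => le_max_right _ _)
    simp only
    linarith
  · intro y hy
    have h4 : ∫ z in y..ΦF, min (f z) 0 ≤ 0 :=
      int_nonpos hy (fun u _ => min_le_right _ _)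
    simp only
    linarith
  · intro y hy
    exact intervalIntegral.integral_nonneg hy (fun u _ => le_max_right _ _)

lemma Dat.cont_q {K : ℝ → ℝ} {ΦF t : ℝ} {Q q : ℝ → ℝ → ℝ} {c : ℝ → ℝ}
    (D : Dat K ΦF t Q q c) {τ : ℝ} (hτ : τ ∈ Icc 0 t) : ContinuousOn (q τ) (Icc 0 1) :=
  D.qcont.comp (f := fun x : ℝ => (τ, x)) (by fun_prop) (fun x hx => ⟨hτ, hx⟩)

lemma Dat.cont_Q {K : ℝ → ℝ} {ΦF t : ℝ} {Q q : ℝ → ℝ → ℝ} {c : ℝ → ℝ}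
    (D : Dat K ΦF t Q q c) {τ : ℝ} (hτ : τ ∈ Icc 0 t) : ContinuousOn (Q τ) (Icc 0 1) :=
  D.Qcont.comp (f := fun x : ℝ => (τ, x)) (by fun_prop) (fun x hx => ⟨hτ, hx⟩)

lemma Dat.Q_mem {K : ℝ → ℝ} {ΦF t : ℝ} {Q q : ℝ → ℝ → ℝ} {c : ℝ → ℝ}
    (D : Dat K ΦF t Q q c) {τ : ℝ} (hτ : τ ∈ Icc 0 t) {η : ℝ} (hη : η ∈ Icc (0 : ℝ) 1) :
    0 ≤ Q τ η ∧ Q τ η ≤ ΦF := by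
  constructor
  · rw [← D.Q0 τ hτ]
    exact D.mono τ hτ ⟨le_rfl, zero_le_one⟩ hη hη.1
  · rw [← D.Q1 τ hτ]
    exact D.mono τ hτ hη ⟨zero_le_one, le_rfl⟩ hη.2

lemma Dat.integral_q {K : ℝ → ℝ} {ΦF t : ℝ} {Q q : ℝ → ℝ → ℝ} {c : ℝ → ℝ}
    (D : Dat K ΦF t Q q c) {τ : ℝ} (hτ : τ ∈ Icc 0 t) {x : ℝ} (hx : x ∈ Icc (0 : ℝ) 1) :
    IntervalIntegrable (q τ) volume 0 x ∧ ∫ η in (0 : ℝ)..x, q τ η = Q τ x := by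
  have hsub : uIcc 0 x ⊆ Icc (0 : ℝ) 1 := by
    rw [uIcc_of_le hx.1]; exact Icc_subset_Icc_right hx.2
  have hi : IntervalIntegrable (q τ) volume 0 x := ((D.cont_q hτ).mono hsub).intervalIntegrable
  refine ⟨hi, ?_⟩
  rw [intervalIntegral.integral_eq_sub_of_hasDeriv_right ((D.cont_Q hτ).mono hsub) ?_ hi,
    D.Q0 τ hτ, sub_zero]
  intro y hy
  rw [min_eq_left hx.1, max_eq_right hx.1] at hy
  have hy' : y ∈ Ico (0 : ℝ) 1 := ⟨hy.1.le, lt_of_lt_of_le hy.2 hx.2⟩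
  exact (D.dEta τ hτ y (Ico_subset_Icc_self hy')).mono_of_mem_nhdsWithin
    (Icc_mem_nhdsGT_of_mem hy')

/-- The distance functional. -/
def VV (q1 q2 : ℝ → ℝ → ℝ) (τ : ℝ) : ℝ := ∫ η in (0 : ℝ)..1, |q1 τ η - q2 τ η|

lemma VV_le {K : ℝ → ℝ} {ΦF t : ℝ} {Q1 q1 Q2 q2 : ℝ → ℝ → ℝ} {c1 c2 : ℝ → ℝ}
    (D1 : Dat K ΦF t Q1 q1 c1) (D2 : Dat K ΦF t Q2 q2 c2) {τ : ℝ} (hτ : τ ∈ Icc 0 t) :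
    VV q1 q2 τ ≤ 2 * ΦF := by
  have h11 : (1 : ℝ) ∈ Icc (0 : ℝ) 1 := ⟨zero_le_one, le_rfl⟩
  obtain ⟨i1, e1⟩ := D1.integral_q hτ h11
  obtain ⟨i2, e2⟩ := D2.integral_q hτ h11
  have : VV q1 q2 τ ≤ ∫ η in (0 : ℝ)..1, (q1 τ η + q2 τ η) := by
    refine intervalIntegral.integral_mono_on zero_le_one (i1.sub i2).abs (i1.add i2) ?_
    intro x hx
    have a1 := D1.qnonneg τ hτ x hx
    have a2 := D2.qnonneg τ hτ x hx
    rw [abs_le]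
    constructor <;> linarith
  rw [intervalIntegral.integral_add i1 i2, e1, e2, D1.Q1 τ hτ, D2.Q1 τ hτ] at this
  linarith

lemma VV_pos {K : ℝ → ℝ} {ΦF t : ℝ} {Q1 q1 Q2 q2 : ℝ → ℝ → ℝ} {c1 c2 : ℝ → ℝ}
    (D1 : Dat K ΦF t Q1 q1 c1) (D2 : Dat K ΦF t Q2 q2 c2) {τ : ℝ} (hτ : τ ∈ Icc 0 t)
    {x : ℝ} (hx : x ∈ Icc (0 : ℝ) 1) (hne : Q1 τ x ≠ Q2 τ x) : 0 < VV q1 q2 τ := by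
  have h11 : (1 : ℝ) ∈ Icc (0 : ℝ) 1 := ⟨zero_le_one, le_rfl⟩
  obtain ⟨i1, e1⟩ := D1.integral_q hτ hx
  obtain ⟨i2, e2⟩ := D2.integral_q hτ hx
  obtain ⟨j1, -⟩ := D1.integral_q hτ h11
  obtain ⟨j2, -⟩ := D2.integral_q hτ h11
  have h1 : 0 < |Q1 τ x - Q2 τ x| := abs_pos.2 (sub_ne_zero.2 hne)
  rw [← e1, ← e2, ← intervalIntegral.integral_sub i1 i2] at h1
  have h2 := intervalIntegral.abs_integral_le_integral_abs (μ := volume)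
    (f := fun η => q1 τ η - q2 τ η) hx.1
  have h3 : ∫ η in (0 : ℝ)..x, |q1 τ η - q2 τ η| ≤ VV q1 q2 τ := by
    refine intervalIntegral.integral_mono_interval le_rfl hx.1 hx.2 ?_ (j1.sub j2).abs
    exact Filter.Eventually.of_forall (fun _ => abs_nonneg _)
  linarith

lemma VV_cont {K : ℝ → ℝ} {ΦF t : ℝ} (ht : 0 ≤ t) {Q1 q1 Q2 q2 : ℝ → ℝ → ℝ} {c1 c2 : ℝ → ℝ}
    (D1 : Dat K ΦF t Q1 q1 c1) (D2 : Dat K ΦF t Q2 q2 c2) :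
    ContinuousOn (VV q1 q2) (Icc 0 t) := by
  have hc : ContinuousOn (fun p : ℝ × ℝ => |q1 p.1 p.2 - q2 p.1 p.2|)
      (Icc 0 t ×ˢ Icc (0 : ℝ) 1) := (D1.qcont.sub D2.qcont).abs
  set cl : ℝ × ℝ → ℝ × ℝ := fun p =>
    ((projIcc 0 t ht p.1 : ℝ), (projIcc (0 : ℝ) 1 zero_le_one p.2 : ℝ)) with hcl
  have hclc : Continuous cl := by
    refine Continuous.prodMk ?_ ?_
    · exact continuous_subtype_val.comp (continuous_projIcc.comp continuous_fst)
    · exact continuous_subtype_val.comp (continuous_projIcc.comp continuous_snd)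
  have hcomp : Continuous (fun p : ℝ × ℝ => |q1 (cl p).1 (cl p).2 - q2 (cl p).1 (cl p).2|) :=
    hc.comp_continuous hclc (fun p => ⟨(projIcc 0 t ht p.1).2, (projIcc (0 : ℝ) 1 zero_le_one p.2).2⟩)
  have hV := intervalIntegral.continuous_parametric_intervalIntegral_of_continuous' (μ := volume)
    (f := fun x y => |q1 (cl (x, y)).1 (cl (x, y)).2 - q2 (cl (x, y)).1 (cl (x, y)).2|) hcomp 0 1
  refine hV.continuousOn.congr ?_
  intro τ hτ
  refine intervalIntegral.integral_congr ?_
  intro η hη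
  rw [uIcc_of_le zero_le_one] at hη
  simp only [hcl, projIcc_of_mem ht hτ, projIcc_of_mem zero_le_one hη]

lemma VV_step {K : ℝ → ℝ} {ΦF t : ℝ} (hK : ContDiff ℝ 2 K) (hk : 0 < kmin K ΦF)
    {Q1 q1 Q2 q2 : ℝ → ℝ → ℝ} {c1 c2 : ℝ → ℝ}
    (D1 : Dat K ΦF t Q1 q1 c1) (D2 : Dat K ΦF t Q2 q2 c2) {τ : ℝ} (hτ : τ ∈ Icc 0 t)
    {ε : ℝ} (hε : 0 < ε) :
    ∃ δ > 0, ∀ h, 0 < h → h < δ → τ + h ≤ t →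
      (1 + h * kmin K ΦF) * VV q1 q2 τ - 6 * h * ε ≤ VV q1 q2 (τ + h) := by
  obtain ⟨a, b, Θ, hdec, hΘ, hanti, hmono, ha0, hb0⟩ := K_decomp (ΦF := ΦF) hK
  set k := kmin K ΦF with hkdef
  have h01 : (0 : ℝ) ∈ Icc (0 : ℝ) 1 := ⟨le_rfl, zero_le_one⟩
  have h11 : (1 : ℝ) ∈ Icc (0 : ℝ) 1 := ⟨zero_le_one, le_rfl⟩
  obtain ⟨δ1, hδ1, H1⟩ := D1.Ksmooth_step hK hε
  obtain ⟨δ2, hδ2, H2⟩ := D2.Ksmooth_step hK hε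
  have hc : ContinuousOn (fun p : ℝ × ℝ => |q1 p.1 p.2 - q2 p.1 p.2|)
      (Icc 0 t ×ˢ Icc (0 : ℝ) 1) := (D1.qcont.sub D2.qcont).abs
  obtain ⟨δ3, hδ3, H3⟩ := Metric.uniformContinuousOn_iff.1
    ((isCompact_Icc.prod isCompact_Icc).uniformContinuousOn_of_continuous hc) ε hε
  set θ := thetaFn Θ (Q1 τ) (Q2 τ) with hθdef
  have hΘc : Continuous Θ := continuous_iff_continuousAt.2 (fun y => (hΘ y).continuousAt)
  have hθc : ContinuousOn θ (Icc 0 1) :=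
    (hΘc.comp_continuousOn (ContinuousOn.sup (D1.cont_Q hτ) (D2.cont_Q hτ))).sub
      (hΘc.comp_continuousOn (ContinuousOn.inf (D1.cont_Q hτ) (D2.cont_Q hτ)))
  have hθ0 : θ 0 = 0 := by simp [hθdef, thetaFn, D1.Q0 τ hτ, D2.Q0 τ hτ]
  have hθ1 : θ 1 = 0 := by simp [hθdef, thetaFn, D1.Q1 τ hτ, D2.Q1 τ hτ]
  obtain ⟨δ4, hδ4, H4⟩ := Metric.continuousWithinAt_iff.1 (hθc 1 h11) ε hε
  set e0 := |q1 τ 1 - q2 τ 1| with he0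
  have he0' : |q1 τ 0 - q2 τ 0| = e0 := by
    have := D1.bq τ hτ
    have := D2.bq τ hτ
    rw [he0]; congr 1; linarith
  have he0n : 0 ≤ e0 := abs_nonneg _
  refine ⟨min (min δ1 δ2) (min (min δ3 δ4) (min 1 (ε / (k * (e0 + ε))))), by positivity, ?_⟩
  intro h hh hhδ hτh
  simp only [lt_min_iff] at hhδ
  obtain ⟨⟨hh1, hh2⟩, ⟨hh3, hh4⟩, hh5, hh6⟩ := hhδ
  have hτh' : τ + h ∈ Icc 0 t := ⟨by linarith [hτ.1], hτh⟩
  have hsmall : h * k * (e0 + ε) ≤ ε := by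
    rw [lt_div_iff₀ (by positivity)] at hh6
    linarith
  -- continuity of the integrands
  have cτ : ContinuousOn (fun η => |q1 τ η - q2 τ η|) (Icc 0 1) :=
    ((D1.cont_q hτ).sub (D2.cont_q hτ)).abs
  have ch : ContinuousOn (fun η => |q1 (τ + h) η - q2 (τ + h) η|) (Icc 0 1) :=
    ((D1.cont_q hτh').sub (D2.cont_q hτh')).abs
  have ii : ∀ {f : ℝ → ℝ}, ContinuousOn f (Icc 0 1) → ∀ {u v : ℝ}, 0 ≤ u → u ≤ v → v ≤ 1 →
      IntervalIntegrable f volume u v := by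
    intro f hf u v hu huv hv
    refine (hf.mono ?_).intervalIntegrable
    rw [uIcc_of_le huv]
    exact Icc_subset_Icc hu hv
  -- I1
  have I1 : h * (e0 - ε) ≤ ∫ η in (0 : ℝ)..h, |q1 (τ + h) η - q2 (τ + h) η| := by
    have : ∫ η in (0 : ℝ)..h, (e0 - ε) ≤ ∫ η in (0 : ℝ)..h, |q1 (τ + h) η - q2 (τ + h) η| := by
      refine intervalIntegral.integral_mono_on hh.le intervalIntegrable_const
        (ii ch le_rfl hh.le hh5.le) ?_
      intro x hx
      have := H3 (τ + h, x) ⟨hτh', hx.1, hx.2.trans hh5.le⟩ (τ, 0) ⟨hτ, h01⟩ (by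
        rw [Prod.dist_eq, max_lt_iff, Real.dist_eq, Real.dist_eq]
        simp only [add_sub_cancel_left, sub_zero]
        rw [abs_of_pos hh, abs_of_nonneg hx.1]
        exact ⟨hh3, lt_of_le_of_lt hx.2 hh3⟩)
      rw [Real.dist_eq, abs_lt] at this
      simp only [he0'] at this
      linarith [this.1]
    rw [intervalIntegral.integral_const, smul_eq_mul] at this
    linarith
  have I4 : ∫ η in (1 - h)..1, |q1 τ η - q2 τ η| ≤ h * (e0 + ε) := by
    have : ∫ η in (1 - h)..1, |q1 τ η - q2 τ η| ≤ ∫ η in (1 - h)..1, (e0 + ε) := by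
      refine intervalIntegral.integral_mono_on (by linarith)
        (ii cτ (by linarith) (by linarith) le_rfl) intervalIntegrable_const ?_
      intro x hx
      have := H3 (τ, x) ⟨hτ, by linarith [hx.1], hx.2⟩ (τ, 1) ⟨hτ, h11⟩ (by
        rw [Prod.dist_eq, max_lt_iff, Real.dist_eq, Real.dist_eq]
        simp only [sub_self, abs_zero]
        rw [abs_of_nonpos (by linarith [hx.2])]
        exact ⟨hδ3, by linarith [hx.1]⟩)
      rw [Real.dist_eq, abs_lt] at this
      simp only [← he0] at this
      linarith [this.2]
    rw [intervalIntegral.integral_const, smul_eq_mul] at this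
    linarith
  have I2 : ∫ η in h..1, |q1 (τ + h) η - q2 (τ + h) η|
      = ∫ ξ in (0 : ℝ)..(1 - h), |q1 (τ + h) (ξ + h) - q2 (τ + h) (ξ + h)| := by
    rw [intervalIntegral.integral_comp_add_right (fun η => |q1 (τ + h) η - q2 (τ + h) η|) h]
    simp
  have csh : ContinuousOn (fun ξ => |q1 (τ + h) (ξ + h) - q2 (τ + h) (ξ + h)|) (Icc 0 (1 - h)) :=
    ch.comp (f := fun ξ : ℝ => ξ + h) (by fun_prop)
      (fun x hx => ⟨by linarith [hx.1], by linarith [hx.2]⟩)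
  have cτ' := cτ.mono (Icc_subset_Icc_right (show 1 - h ≤ 1 by linarith))
  -- I3
  have pt : ∀ x ∈ Ioo (0 : ℝ) (1 - h), ∃ d, HasDerivWithinAt θ d (Ioi x) x ∧
      h * d ≤ |q1 (τ + h) (x + h) - q2 (τ + h) (x + h)|
        - (1 + h * k) * |q1 τ x - q2 τ x| + 2 * h * ε := by
    intro x hx
    have hx' : x ∈ Ico (0 : ℝ) 1 := ⟨hx.1.le, by linarith [hx.2]⟩
    have hx1 := Ico_subset_Icc_self hx'
    have dA : HasDerivWithinAt (Q1 τ) (q1 τ x) (Ioi x) x :=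
      (D1.dEta τ hτ x hx1).mono_of_mem_nhdsWithin (Icc_mem_nhdsGT_of_mem hx')
    have dB : HasDerivWithinAt (Q2 τ) (q2 τ x) (Ioi x) x :=
      (D2.dEta τ hτ x hx1).mono_of_mem_nhdsWithin (Icc_mem_nhdsGT_of_mem hx')
    have s1 := H1 τ hτ h hh hh1 hτh x hx.1.le hx.2
    have s2 := H2 τ hτ h hh hh2 hτh x hx.1.le hx.2
    have n1 := D1.qnonneg τ hτ x hx1
    have n2 := D2.qnonneg τ hτ x hx1
    obtain ⟨m1, m1'⟩ := D1.Q_mem hτ hx1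
    obtain ⟨m2, m2'⟩ := D2.Q_mem hτ hx1
    rw [hdec] at s1 s2
    have tri : |q1 τ x - q2 τ x + h * ((k + a (Q1 τ x) + b (Q1 τ x)) * q1 τ x
        - (k + a (Q2 τ x) + b (Q2 τ x)) * q2 τ x)| ≤
        |q1 (τ + h) (x + h) - q2 (τ + h) (x + h)| + 2 * h * ε := by
      rw [abs_le] at s1 s2
      rw [abs_le]
      have u1 := le_abs_self (q1 (τ + h) (x + h) - q2 (τ + h) (x + h))
      have u2 := neg_abs_le (q1 (τ + h) (x + h) - q2 (τ + h) (x + h))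
      constructor
      · linarith [s1.1, s1.2, s2.1, s2.2]
      · linarith [s1.1, s1.2, s2.1, s2.2]
    rcases theta_deriv (Θ' := fun y => a y - b y) hΘ dA dB with ⟨hle, hd⟩ | ⟨hle, hd⟩
    · refine ⟨_, hd, ?_⟩
      have := alg_ineq (k := k) hh.le n1 n2 (ha0 _ m1') (hanti _ _ hle) (hb0 _ m2) (hmono _ _ hle)
      linarith
    · refine ⟨_, hd, ?_⟩
      have := alg_ineq (k := k) hh.le n2 n1 (ha0 _ m2') (hanti _ _ hle) (hb0 _ m1) (hmono _ _ hle)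
      rw [abs_sub_comm (q2 τ x)] at this
      have e : |q2 τ x - q1 τ x + h * ((k + a (Q2 τ x) + b (Q2 τ x)) * q2 τ x
        - (k + a (Q1 τ x) + b (Q1 τ x)) * q1 τ x)| = |q1 τ x - q2 τ x
        + h * ((k + a (Q1 τ x) + b (Q1 τ x)) * q1 τ x
        - (k + a (Q2 τ x) + b (Q2 τ x)) * q2 τ x)| := by
        rw [← abs_neg]; congr 1; ring
      rw [e] at this
      linarith
  choose! d hd hdle using pt
  have I3 := intervalIntegral.sub_le_integral_of_hasDeriv_right_of_le
    (g := fun x => h * θ x) (g' := fun x => h * d x) (a := 0) (b := 1 - h)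
    (φ := fun x => |q1 (τ + h) (x + h) - q2 (τ + h) (x + h)|
        - (1 + h * k) * |q1 τ x - q2 τ x| + 2 * h * ε) (by linarith)
    (continuousOn_const.mul (hθc.mono (Icc_subset_Icc_right (by linarith))))
    (fun x hx => (hd x hx).const_mul h)
    (((csh.sub (continuousOn_const.mul cτ')).add continuousOn_const).integrableOn_Icc)
    hdle
  have i1 : IntervalIntegrable (fun ξ => |q1 (τ + h) (ξ + h) - q2 (τ + h) (ξ + h)|) volume
      0 (1 - h) := by
    refine ContinuousOn.intervalIntegrable ?_
    rwa [uIcc_of_le (by linarith)]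
  have i2 := ii cτ le_rfl (show 0 ≤ 1 - h by linarith) (by linarith)
  rw [intervalIntegral.integral_add (i1.sub (i2.const_mul _)) intervalIntegrable_const,
    intervalIntegral.integral_sub i1 (i2.const_mul _), intervalIntegral.integral_const_mul,
    intervalIntegral.integral_const, ← I2] at I3
  simp only [hθ0, mul_zero, sub_zero, smul_eq_mul] at I3
  have hθs : -ε ≤ θ (1 - h) := by
    have := H4 (x := 1 - h) ⟨by linarith, by linarith⟩ (by
      rw [Real.dist_eq, abs_of_nonpos (by linarith)]; linarith)
    rw [Real.dist_eq, hθ1, sub_zero, abs_lt] at this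
    exact this.1.le
  have S1 := intervalIntegral.integral_add_adjacent_intervals
    (ii ch le_rfl hh.le hh5.le) (ii ch hh.le hh5.le le_rfl)
  have S2 := intervalIntegral.integral_add_adjacent_intervals i2
    (ii cτ (show 0 ≤ 1 - h by linarith) (by linarith) le_rfl)
  have p1 : (1 + h * k) * (∫ η in (1 - h)..1, |q1 τ η - q2 τ η|)
      ≤ (1 + h * k) * (h * (e0 + ε)) := mul_le_mul_of_nonneg_left I4 (by positivity)
  have p2 : h * (h * k * (e0 + ε)) ≤ h * ε := mul_le_mul_of_nonneg_left hsmall hh.le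
  have p3 : h * (-ε) ≤ h * θ (1 - h) := mul_le_mul_of_nonneg_left hθs hh.le
  have p4 : 0 ≤ h * (h * ε) := by positivity
  unfold VV
  rw [← S1, ← S2]
  nlinarith

lemma VV_growth {K : ℝ → ℝ} {ΦF t : ℝ} (ht : 0 ≤ t) (hK : ContDiff ℝ 2 K) (hk : 0 < kmin K ΦF)
    {Q1 q1 Q2 q2 : ℝ → ℝ → ℝ} {c1 c2 : ℝ → ℝ}
    (D1 : Dat K ΦF t Q1 q1 c1) (D2 : Dat K ΦF t Q2 q2 c2) :
    VV q1 q2 0 * Real.exp (kmin K ΦF * t) ≤ VV q1 q2 t := by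
  have := le_gronwallBound_of_liminf_deriv_right_le (f := fun τ => -VV q1 q2 τ)
    (f' := fun τ => kmin K ΦF * (-VV q1 q2 τ)) (δ := -VV q1 q2 0) (K := kmin K ΦF) (ε := 0)
    (a := 0) (b := t) (VV_cont ht D1 D2).neg ?_ le_rfl (fun x _ => by simp) t ⟨ht, le_rfl⟩
  · rw [gronwallBound_ε0, sub_zero] at this
    linarith
  · intro x hx r hr
    refine Filter.Eventually.frequently ?_
    set ε := (r - kmin K ΦF * (-VV q1 q2 x)) / 12 with hε
    have hεp : 0 < ε := by rw [hε]; linarith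
    obtain ⟨δ, hδ, H⟩ := VV_step hK hk D1 D2 (Ico_subset_Icc_self hx) hεp
    have hI : Ioo x (min t (x + δ)) ∈ 𝓝[>] x := Ioo_mem_nhdsGT (lt_min hx.2 (by linarith))
    filter_upwards [hI] with z hz
    have hz2 := lt_min_iff.1 hz.2
    have hp : 0 < z - x := by linarith [hz.1]
    have := H (z - x) hp (by linarith) (by linarith)
    rw [add_sub_cancel] at this
    rw [inv_mul_lt_iff₀ hp]
    have e : r = kmin K ΦF * (-VV q1 q2 x) + 12 * ε := by rw [hε]; ring
    have := mul_pos hp hεp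
    rw [e]
    nlinarith

/-- Corollary 6.3: explicit upper bound on the blow-up time when `k_min > 0` and the unique
steady state exists. -/
theorem stmt17 (ΦF : ℝ) (hΦF : 0 < ΦF) (K : ℝ → ℝ) (hK : KAssump K ΦF)
    (hkmin : 0 < kmin K ΦF)
    (hint : 1 < ∫ φ in (0 : ℝ)..ΦF, 1 / K φ)
    (Qs : ℝ → ℝ) (Ns : ℝ) (hss : IsSteadyState K ΦF Qs Ns)
    (Qinit : ℝ → ℝ) (hA2 : A2 K ΦF Qinit)
    (hne : ¬ ∀ η ∈ Icc (0 : ℝ) 1, Qinit η = Qs η) :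
    ∀ (T : ℝ≥0∞) (Q : ℝ → ℝ → ℝ) (N : ℝ → ℝ), IsQSol K ΦF T Qinit Q N →
      T ≤ ENNReal.ofReal ((1 / kmin K ΦF) *
        Real.log (2 * ΦF /
          ∫ η in (0 : ℝ)..1,
            |derivWithin Qinit (Icc 0 1) η - derivWithin Qs (Icc 0 1) η|)) := by
  intro T Q N hQ
  have hS := sol_of_steady hΦF hK hss
  obtain ⟨x, hx, hxne⟩ : ∃ x ∈ Icc (0 : ℝ) 1, Qinit x ≠ Qs x := by
    by_contra hcon
    push Not at hcon
    exact hne hcon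
  have hV0 : (∫ η in (0 : ℝ)..1,
      |derivWithin Qinit (Icc 0 1) η - derivWithin Qs (Icc 0 1) η|)
      = VV (pdEta Q) (pdEta (fun _ => Qs)) 0 := by
    refine intervalIntegral.integral_congr ?_
    intro η hη
    rw [uIcc_of_le zero_le_one] at hη
    have e : derivWithin (fun x => Q 0 x) (Icc 0 1) η = derivWithin Qinit (Icc 0 1) η :=
      derivWithin_congr (fun y hy => hQ.init y hy) (hQ.init η hη)
    simp only [pdEta, e]
  rw [hV0]
  refine le_of_forall_lt_imp_le_of_dense ?_
  intro s hs
  have hsfin : s ≠ ⊤ := ne_top_of_lt hs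
  set t := s.toReal with htdef
  have hst : ENNReal.ofReal t = s := ENNReal.ofReal_toReal hsfin
  have ht0 : 0 ≤ t := ENNReal.toReal_nonneg
  have ht : t ∈ Ico0 T := ⟨ht0, by rw [hst]; exact hs⟩
  have ht' : t ∈ Ico0 ⊤ := ⟨ht0, ENNReal.ofReal_lt_top⟩
  have D1 := dat_of_sol hK hQ ht
  have D2 := dat_of_sol hK hS ht'
  have hz : (0 : ℝ) ∈ Icc 0 t := ⟨le_rfl, ht0⟩
  have hpos := VV_pos D1 D2 hz hx (by rw [hQ.init x hx]; exact hxne)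
  have hgr := (VV_growth ht0 hK.smooth hkmin D1 D2).trans (VV_le D1 D2 ⟨ht0, le_rfl⟩)
  rw [← hst]
  refine ENNReal.ofReal_le_ofReal ?_
  rw [one_div, ← div_eq_inv_mul, le_div_iff₀ hkmin, Real.le_log_iff_exp_le (by positivity),
    le_div_iff₀ hpos, mul_comm t]
  linarith
end
end
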